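/- arXiv:cond-mat/0205123 — 2 statements merged into one kernel-verified Lean document; each statement's English description precedes it below -/
import Mathlib

section
/- For every β ≥ 0 and h ∈ ℝ, limsup_{N→∞} N⁻¹ E log Z_N(β,h,J) ≤ ᾱ(β,h), where ᾱ(β,h) is the infimum of the trial function ᾱ(β,h;x) over all piecewise constant functional order parameters x. -/
open MeasureTheory ProbabilityTheory Filter

noncomputable section

/-! ## Gaussian disorder -/

/-- The standard (centered, unit variance) Gaussian measure on `ℝ`. -/
def stdGauss : Measure ℝ := gaussianReal 0 1

instance : IsProbabilityMeasure stdGauss := by unfold stdGauss; infer_instance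

/-- `N` i.i.d. standard Gaussian variables. -/
def gaussN (N : ℕ) : Measure (Fin N → ℝ) := Measure.pi fun _ => stdGauss

instance (N : ℕ) : IsProbabilityMeasure (gaussN N) := by unfold gaussN; infer_instance

/-- The i.i.d. standard Gaussian couplings `J_{ij}` (only entries with `i < j` are used). -/
def gaussC (N : ℕ) : Measure (Fin N → Fin N → ℝ) := Measure.pi fun _ => gaussN N

instance (N : ℕ) : IsProbabilityMeasure (gaussC N) := by unfold gaussC; infer_instance

/-- The i.i.d. standard Gaussian one-body fields `J_i^a`, `a = 1, …, K`
(row `⟨a-1⟩ : Fin K` corresponds to the level `a` of the paper). -/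
def gaussS (K N : ℕ) : Measure (Fin K → Fin N → ℝ) := Measure.pi fun _ => gaussN N

instance (K N : ℕ) : IsProbabilityMeasure (gaussS K N) := by unfold gaussS; infer_instance

/-- I.i.d. standard Gaussian couplings indexed by subsets of sites, for the p-spin model
(only the cardinality-`p` subsets are used). -/
def gaussP (N : ℕ) : Measure (Finset (Fin N) → ℝ) := Measure.pi fun _ => stdGauss

instance (N : ℕ) : IsProbabilityMeasure (gaussP N) := by unfold gaussP; infer_instance

/-! ## Spins and overlaps -/

/-- The spin value (`±1`) of a Boolean configuration entry. -/
def spin (b : Bool) : ℝ := if b then 1 else -1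

/-- The overlap `q₁₂ = N⁻¹ ∑ᵢ σᵢ⁽¹⁾ σᵢ⁽²⁾` of two replicas. -/
def overlap (N : ℕ) (σ τ : Fin N → Bool) : ℝ := (N : ℝ)⁻¹ * ∑ i, spin (σ i) * spin (τ i)

/-! ## Piecewise constant functional order parameters and the Parisi function -/

/-- One backward step of the Parisi recursion on an interval of constancy of the
functional order parameter: from `g = f(q_a, ·)`, with value `m` of the order parameter
and `s = q_a - q`, produce `f(q, ·)`. -/
def pStep (m s : ℝ) (g : ℝ → ℝ) (y : ℝ) : ℝ :=
  if m = 0 then ∫ z, g (y + z * Real.sqrt s) ∂stdGauss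
  else m⁻¹ * Real.log (∫ z, Real.exp (m * g (y + z * Real.sqrt s)) ∂stdGauss)

/-- `parisiLevel K q m β j` is the Parisi function `f(q_{K-j}, ·; x, β)` at the node
`q_{K-j}`, obtained by `j` backward steps from the final condition `f(q_K, y) = log cosh (β y)`. -/
def parisiLevel (K : ℕ) (q m : ℕ → ℝ) (β : ℝ) : ℕ → ℝ → ℝ
  | 0 => fun y => Real.log (Real.cosh (β * y))
  | j + 1 => pStep (m (K - j)) (q (K - j) - q (K - j - 1)) (parisiLevel K q m β j)

/-- The Parisi function `f(r, y; x, β)` for a piecewise constant order parameter `x`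
given by nodes `q` and values `m`:  for `q_{a-1} ≤ r ≤ q_a` it is obtained from
`f(q_a, ·)` by one backward step with value `m_a` over a time `q_a - r`. -/
def parisiF (K : ℕ) (q m : ℕ → ℝ) (β : ℝ) (r y : ℝ) : ℝ :=
  pStep (m (sInf {a : ℕ | r ≤ q a})) (q (sInf {a : ℕ | r ≤ q a}) - r)
    (parisiLevel K q m β (K - sInf {a : ℕ | r ≤ q a})) y

/-- The functional order parameter as a function: `x(r) = m_a` for `q_{a-1} ≤ r < q_a`,
and `x(1) = m_K`. -/
def xFun (K : ℕ) (q m : ℕ → ℝ) (r : ℝ) : ℝ :=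
  if 1 ≤ r then m K else m (sInf {a : ℕ | r < q a})

/-- A piecewise constant functional order parameter:
`0 = q_0 ≤ q_1 ≤ … ≤ q_K = 1`, `0 ≤ m_1 ≤ … ≤ m_K ≤ 1`,
with the conventions `m_0 = 0`, `m_{K+1} = 1`. -/
structure OrderParam where
  K : ℕ
  hK : 1 ≤ K
  q : ℕ → ℝ
  m : ℕ → ℝ
  hq0 : q 0 = 0
  hqK : q K = 1
  hq_mono : ∀ a, a < K → q a ≤ q (a + 1)
  hm0 : m 0 = 0
  hmtop : m (K + 1) = 1
  hm1 : 0 ≤ m 1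
  hm_mono : ∀ a, 1 ≤ a → a < K → m a ≤ m (a + 1)
  hmK : m K ≤ 1

/-- Guerra's trial function `ᾱ(β, h; x) = log 2 + f(0, h; x, β) - (β²/2) ∫₀¹ r x(r) dr`. -/
def trialAlpha (K : ℕ) (q m : ℕ → ℝ) (β h : ℝ) : ℝ :=
  Real.log 2 + parisiLevel K q m β K h - β ^ 2 / 2 * ∫ r in (0 : ℝ)..1, r * xFun K q m r

/-! ## The Sherrington–Kirkpatrick model -/

/-- The SK Hamiltonian `H_N(σ, h, J) = -(1/√N) ∑_{i<j} J_{ij} σ_i σ_j - h ∑_i σ_i`. -/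
def hamSK (N : ℕ) (h : ℝ) (Jc : Fin N → Fin N → ℝ) (σ : Fin N → Bool) : ℝ :=
  -(1 / Real.sqrt N) * ∑ i, ∑ j, (if i < j then Jc i j * spin (σ i) * spin (σ j) else 0)
    - h * ∑ i, spin (σ i)

/-- The SK partition function `Z_N(β, h, J)`. -/
def ZSK (N : ℕ) (β h : ℝ) (Jc : Fin N → Fin N → ℝ) : ℝ :=
  ∑ σ : Fin N → Bool, Real.exp (-(β * hamSK N h Jc σ))

/-- The quenched average `N⁻¹ E log Z_N(β, h, J)`. -/
def quenchedFE (N : ℕ) (β h : ℝ) : ℝ :=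
  (N : ℝ)⁻¹ * ∫ Jc, Real.log (ZSK N β h Jc) ∂gaussC N

/-- The ground state energy density `e_N(J, h)`, defined by
`-e_N(J, h) = N⁻¹ min_σ H_N(σ, h, J)`. -/
def eGS (N : ℕ) (h : ℝ) (Jc : Fin N → Fin N → ℝ) : ℝ :=
  -((N : ℝ)⁻¹ * ⨅ σ : Fin N → Bool, hamSK N h Jc σ)

/-- The quenched ground state energy density `e_N(h) = E(e_N(J, h))`. -/
def eQuenched (N : ℕ) (h : ℝ) : ℝ := ∫ Jc, eGS N h Jc ∂gaussC N

/-! ## The interpolating system -/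

/-- The interpolating Boltzmann factor. -/
def bFac (N K : ℕ) (β h t : ℝ) (q : ℕ → ℝ) (Jc : Fin N → Fin N → ℝ)
    (Js : Fin K → Fin N → ℝ) (σ : Fin N → Bool) : ℝ :=
  Real.exp (β * Real.sqrt (t / N) *
        ∑ i, ∑ j, (if i < j then Jc i j * spin (σ i) * spin (σ j) else 0)
      + β * h * ∑ i, spin (σ i)
      + β * Real.sqrt (1 - t) *
          ∑ a : Fin K, Real.sqrt (q (a.val + 1) - q a.val) * ∑ i, Js a i * spin (σ i))

/-- The interpolating partition function `Z̃_N(β, h; t; x; J)`. -/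
def Ztil (N K : ℕ) (β h t : ℝ) (q : ℕ → ℝ) (Jc : Fin N → Fin N → ℝ)
    (Js : Fin K → Fin N → ℝ) : ℝ :=
  ∑ σ : Fin N → Bool, bFac N K β h t q Jc Js σ

/-- `Wrec … j` is the random variable `Z_{K-j}`:  `Z_K = Z̃_N` and
`Z_{a-1} = (E_a (Z_a^{m_a}))^{1/m_a}`, where `E_a` integrates the Gaussian row `J^a`. -/
def Wrec (N K : ℕ) (β h t : ℝ) (q m : ℕ → ℝ) :
    ℕ → (Fin N → Fin N → ℝ) → (Fin K → Fin N → ℝ) → ℝ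
  | 0 => Ztil N K β h t q
  | j + 1 => fun Jc Js =>
      if hj : j < K then
        (∫ g : Fin N → ℝ,
            (Wrec N K β h t q m j Jc (Function.update Js ⟨K - 1 - j, by omega⟩ g)) ^ m (K - j)
          ∂gaussN N) ^ (m (K - j))⁻¹
      else Wrec N K β h t q m j Jc Js

/-- `Zrec … a` is the random variable `Z_a` of the broken replica interpolation. -/
def Zrec (N K : ℕ) (β h t : ℝ) (q m : ℕ → ℝ) (a : ℕ) :
    (Fin N → Fin N → ℝ) → (Fin K → Fin N → ℝ) → ℝ :=
  Wrec N K β h t q m (K - a)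

/-- The interpolating auxiliary function `α̃_N(t) = N⁻¹ E₀ log Z₀`. -/
def atilde (N K : ℕ) (β h : ℝ) (q m : ℕ → ℝ) (t : ℝ) : ℝ :=
  (N : ℝ)⁻¹ * ∫ Jc, Real.log (Wrec N K β h t q m K Jc 0) ∂gaussC N

/-- The normalized weight `f_a = Z_a^{m_a} / E_a(Z_a^{m_a}) = Z_a^{m_a} / Z_{a-1}^{m_a}`. -/
def fWeight (N K : ℕ) (β h t : ℝ) (q m : ℕ → ℝ) (a : ℕ) (Jc : Fin N → Fin N → ℝ)
    (Js : Fin K → Fin N → ℝ) : ℝ :=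
  Zrec N K β h t q m a Jc Js ^ m a / Zrec N K β h t q m (a - 1) Jc Js ^ m a

/-- The Gibbs expectation `ω(A)` of the interpolating Boltzmann factor. -/
def gibbs (N K : ℕ) (β h t : ℝ) (q : ℕ → ℝ) (A : (Fin N → Bool) → ℝ)
    (Jc : Fin N → Fin N → ℝ) (Js : Fin K → Fin N → ℝ) : ℝ :=
  (∑ σ : Fin N → Bool, A σ * bFac N K β h t q Jc Js σ) / Ztil N K β h t q Jc Js

/-- The two-replica Gibbs product expectation `Ω(A)`. -/
def gibbs2 (N K : ℕ) (β h t : ℝ) (q : ℕ → ℝ) (A : (Fin N → Bool) → (Fin N → Bool) → ℝ)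
    (Jc : Fin N → Fin N → ℝ) (Js : Fin K → Fin N → ℝ) : ℝ :=
  (∑ σ : Fin N → Bool, ∑ τ : Fin N → Bool,
      A σ τ * bFac N K β h t q Jc Js σ * bFac N K β h t q Jc Js τ) /
    Ztil N K β h t q Jc Js ^ 2

/-- `omT1 … A j` is the partially averaged state `ω̃_{K-j}(A)`:
`ω̃_K = ω` and `ω̃_{a-1}(·) = E_a (f_a ω̃_a(·))`. -/
def omT1 (N K : ℕ) (β h t : ℝ) (q m : ℕ → ℝ) (A : (Fin N → Bool) → ℝ) :
    ℕ → (Fin N → Fin N → ℝ) → (Fin K → Fin N → ℝ) → ℝ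
  | 0 => gibbs N K β h t q A
  | j + 1 => fun Jc Js =>
      if hj : j < K then
        ∫ g : Fin N → ℝ,
          fWeight N K β h t q m (K - j) Jc (Function.update Js ⟨K - 1 - j, by omega⟩ g) *
            omT1 N K β h t q m A j Jc (Function.update Js ⟨K - 1 - j, by omega⟩ g)
          ∂gaussN N
      else omT1 N K β h t q m A j Jc Js

/-- `omT2 … A j` is the partially averaged two-replica state `Ω̃_{K-j}(A)`:
`Ω̃_K = Ω` and `Ω̃_{a-1}(·) = E_a (f_a Ω̃_a(·))`. -/
def omT2 (N K : ℕ) (β h t : ℝ) (q m : ℕ → ℝ) (A : (Fin N → Bool) → (Fin N → Bool) → ℝ) :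
    ℕ → (Fin N → Fin N → ℝ) → (Fin K → Fin N → ℝ) → ℝ
  | 0 => gibbs2 N K β h t q A
  | j + 1 => fun Jc Js =>
      if hj : j < K then
        ∫ g : Fin N → ℝ,
          fWeight N K β h t q m (K - j) Jc (Function.update Js ⟨K - 1 - j, by omega⟩ g) *
            omT2 N K β h t q m A j Jc (Function.update Js ⟨K - 1 - j, by omega⟩ g)
          ∂gaussN N
      else omT2 N K β h t q m A j Jc Js

/-- The deformed quenched average `⟨A⟩_a = E(f_1 ⋯ f_a Ω̃_a(A))` at interpolation
parameter `t`, for a function `A` of two replicas. -/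
def angA (N K : ℕ) (β h t : ℝ) (q m : ℕ → ℝ) (a : ℕ)
    (A : (Fin N → Bool) → (Fin N → Bool) → ℝ) : ℝ :=
  ∫ Jc, ∫ Js,
      (∏ b ∈ Finset.Icc 1 a, fWeight N K β h t q m b Jc Js) *
        omT2 N K β h t q m A (K - a) Jc Js
    ∂gaussS K N ∂gaussC N

/-! ## Zero temperature (ground state) objects -/

/-- The zero-temperature Parisi recursion: `parisiLevelBar K q m j` is `f̄(q_{K-j}, ·; x̄)`,
with final condition `f̄(q_K, y) = |y|`. -/
def parisiLevelBar (K : ℕ) (q m : ℕ → ℝ) : ℕ → ℝ → ℝ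
  | 0 => fun y => |y|
  | j + 1 => pStep (m (K - j)) (q (K - j) - q (K - j - 1)) (parisiLevelBar K q m j)

/-- A zero-temperature piecewise constant order parameter: nodes
`0 = q_0 ≤ … ≤ q_K = 1` and nondecreasing values `0 ≤ m̄_1 ≤ … ≤ m̄_K`
(no upper bound `1`), with the convention `m̄_0 = 0`. -/
structure ZeroTParam where
  K : ℕ
  hK : 1 ≤ K
  q : ℕ → ℝ
  m : ℕ → ℝ
  hq0 : q 0 = 0
  hqK : q K = 1
  hq_mono : ∀ a, a < K → q a ≤ q (a + 1)
  hm0 : m 0 = 0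
  hm1 : 0 ≤ m 1
  hm_mono : ∀ a, 1 ≤ a → a < K → m a ≤ m (a + 1)

/-- The zero-temperature trial function `α̃(h; x̄) = f̄(0, h; x̄) - (1/2) ∫₀¹ r x̄(r) dr`. -/
def gsTrial (K : ℕ) (q m : ℕ → ℝ) (h : ℝ) : ℝ :=
  parisiLevelBar K q m K h - 1 / 2 * ∫ r in (0 : ℝ)..1, r * xFun K q m r

/-! ## The p-spin model -/

/-- A piecewise constant functional order parameter on `[0, p/2]`:
`0 = q_0 ≤ … ≤ q_K = p/2` and `0 ≤ m_1 ≤ … ≤ m_K ≤ 1`. -/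
structure POrderParam (p : ℕ) where
  K : ℕ
  hK : 1 ≤ K
  q : ℕ → ℝ
  m : ℕ → ℝ
  hq0 : q 0 = 0
  hqK : q K = p / 2
  hq_mono : ∀ a, a < K → q a ≤ q (a + 1)
  hm1 : 0 ≤ m 1
  hm_mono : ∀ a, 1 ≤ a → a < K → m a ≤ m (a + 1)
  hmK : m K ≤ 1

/-- The p-spin Hamiltonian
`H_N(σ,h,J) = -(p!/(2N^{p-1}))^{1/2} ∑_{i_1<…<i_p} J_{i_1…i_p} σ_{i_1}⋯σ_{i_p} - h ∑_i σ_i`. -/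
def hamP (p N : ℕ) (h : ℝ) (J : Finset (Fin N) → ℝ) (σ : Fin N → Bool) : ℝ :=
  -Real.sqrt ((Nat.factorial p : ℝ) / (2 * (N : ℝ) ^ (p - 1))) *
      ∑ S ∈ Finset.powersetCard p (Finset.univ : Finset (Fin N)), J S * ∏ i ∈ S, spin (σ i)
    - h * ∑ i, spin (σ i)

/-- The p-spin partition function. -/
def ZP (p N : ℕ) (β h : ℝ) (J : Finset (Fin N) → ℝ) : ℝ :=
  ∑ σ : Fin N → Bool, Real.exp (-(β * hamP p N h J σ))

/-- The p-spin quenched average `N⁻¹ E log Z_N^{(p)}(β, h, J)`. -/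
def quenchedFEP (p N : ℕ) (β h : ℝ) : ℝ :=
  (N : ℝ)⁻¹ * ∫ J, Real.log (ZP p N β h J) ∂gaussP N

/-- The functional order parameter on `[0, p/2]` as a function. -/
def xFunP (p K : ℕ) (q m : ℕ → ℝ) (r : ℝ) : ℝ :=
  if (p : ℝ) / 2 ≤ r then m K else m (sInf {a : ℕ | r < q a})

/-- The change of variables `q̄(r)` defined by `2r = p q̄^{p-1}`. -/
def qBar (p : ℕ) (r : ℝ) : ℝ := (2 * r / p) ^ (((p : ℝ) - 1)⁻¹)

/-- The p-spin trial function
`ᾱ_p(β, h; x) = log 2 + f(0, h; x, β) - (β²/2) ∫₀^{p/2} q̄(r) x(r) dr`. -/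
def trialAlphaP (p K : ℕ) (q m : ℕ → ℝ) (β h : ℝ) : ℝ :=
  Real.log 2 + parisiLevel K q m β K h
    - β ^ 2 / 2 * ∫ r in (0 : ℝ)..((p : ℝ) / 2), qBar p r * xFunP p K q m r

/-!
Guerra's interpolation. Attach to every interval `[q_{a-1}, q_a)` of the order parameter independent
Gaussian fields of strength `β √(q_a - q_{a-1})` at the sites, and average `log ∑ exp` first over
the fields by iterated log-means `m⁻¹ log E exp (m ·)`, the highest level innermost, and then over
the couplings. With the couplings multiplied by `sin θ` and the fields by `cos θ`, the result is
`E log Z_N` at `θ = π / 2` and splits into `N` copies of the Parisi function at `θ = 0`.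

The Gaussian variables are averaged one at a time. By integration by parts, replacing `F` by its
log-mean over a variable of amplitude `sin (θ + φ)` in the direction `v` adds to the `θ`-derivative
`sin (θ + φ) cos (θ + φ)` times a tilted mean of `∂_v² F + m (∂_v F)²`. Tilted means compose, so an
upper bound on the total drift, which counts all variables yet to be averaged, survives each
average. Passing from `m_{a+1}` to `m_a` between two levels subtracts the terms
`(m_{a+1} - m_a) (∂_v F)²`. Since `∇F` is a probability vector, the sums of `(∂_v F)²` over the
fields and over the couplings are the means of the overlap `R` and of `R²` for two independent
samples from it, and `⟨(R - q_a)²⟩ ≥ 0` compares them. The resulting constants add up to the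
correction term `(β² / 2) ∫ q x(q) dq`.
-/

open scoped Topology NNReal

/-! ### Gaussian integration by parts -/

lemma hasDerivAt_gaussianPDFReal (μ : ℝ) {v : ℝ≥0} (hv : v ≠ 0) (x : ℝ) :
    HasDerivAt (gaussianPDFReal μ v) (-((x - μ) / v) * gaussianPDFReal μ v x) x := by
  have hv' : (v : ℝ) ≠ 0 := mod_cast hv
  have h : HasDerivAt (fun x : ℝ => -(x - μ) ^ 2 / (2 * v)) (-((x - μ) / v)) x :=
    ((((hasDerivAt_id x).sub_const μ).pow 2).neg.div_const (2 * (v : ℝ))).congr_deriv (by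
      simp only [id_eq]
      field_simp
      ring)
  rw [gaussianPDFReal_def]
  exact (h.exp.const_mul (√(2 * Real.pi * v))⁻¹).congr_deriv (by ring)

lemma integrable_gaussianReal_iff {μ : ℝ} {v : ℝ≥0} (hv : v ≠ 0) {f : ℝ → ℝ} :
    Integrable f (gaussianReal μ v) ↔ Integrable fun x => gaussianPDFReal μ v x * f x := by
  rw [gaussianReal_of_var_ne_zero μ hv, integrable_withDensity_iff_integrable_smul₀'
    (by fun_prop) (Eventually.of_forall fun _ => gaussianPDF_lt_top)]
  simp only [toReal_gaussianPDF, smul_eq_mul]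

lemma integral_sub_mul_gaussianReal {μ : ℝ} {v : ℝ≥0} {f f' : ℝ → ℝ}
    (hderiv : ∀ x, HasDerivAt f (f' x) x) (hf : Integrable f (gaussianReal μ v))
    (hf' : Integrable f' (gaussianReal μ v))
    (hxf : Integrable (fun x => (x - μ) * f x) (gaussianReal μ v)) :
    ∫ x, (x - μ) * f x ∂gaussianReal μ v = v * ∫ x, f' x ∂gaussianReal μ v := by
  rcases eq_or_ne v 0 with rfl | hv
  · simp
  have hv' : (v : ℝ) ≠ 0 := mod_cast hv
  rw [integrable_gaussianReal_iff hv] at hf hf' hxf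
  have hparts := integral_mul_deriv_eq_deriv_mul_of_integrable
    (fun x _ => hasDerivAt_gaussianPDFReal μ hv x) (fun x _ => hderiv x) hf'
    ((hxf.const_mul (-(v : ℝ)⁻¹)).congr (Eventually.of_forall fun x => by
      simp only [Pi.mul_apply]; ring)) hf
  simp only [integral_gaussianReal_eq_integral_smul hv, smul_eq_mul]
  rw [hparts, ← integral_neg, ← integral_const_mul]
  congr with x
  field_simp

/-! ### Functions of exponential growth -/

/-- `f` is continuous and grows at most exponentially in the norm; such functions can be integrated
against Gaussian measures, and differentiated under these integrals. -/
structure HasExpGrowth {F : Type*} [NormedAddCommGroup F] (f : F → ℝ) : Prop where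
  continuous : Continuous f
  exists_bound : ∃ B b : ℝ, 0 ≤ B ∧ 0 ≤ b ∧ ∀ x, |f x| ≤ B * Real.exp (b * ‖x‖)

lemma integrable_exp_mul_abs_gaussianReal {μ : ℝ} {v : ℝ≥0} (c : ℝ) :
    Integrable (fun z => Real.exp (c * |z|)) (gaussianReal μ v) :=
  integrable_exp_mul_abs (X := fun z : ℝ => z) (integrable_exp_mul_gaussianReal c)
    (integrable_exp_mul_gaussianReal (-c))

namespace HasExpGrowth

variable {F G : Type*} [NormedAddCommGroup F] [NormedAddCommGroup G] {f g : F → ℝ}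

lemma of_abs_le (hf : Continuous f) {C : ℝ} (hC : ∀ x, |f x| ≤ C) : HasExpGrowth f :=
  ⟨hf, C, 0, (abs_nonneg _).trans (hC 0), le_rfl, fun x => by simpa using hC x⟩

protected lemma add (hf : HasExpGrowth f) (hg : HasExpGrowth g) :
    HasExpGrowth fun x => f x + g x := by
  obtain ⟨hfc, B, b, hB, hb, hfb⟩ := hf
  obtain ⟨hgc, C, c, hC, -, hgb⟩ := hg
  refine ⟨hfc.add hgc, B + C, max b c, by positivity, le_max_of_le_left hb, fun x => ?_⟩
  calc |f x + g x| ≤ B * Real.exp (b * ‖x‖) + C * Real.exp (c * ‖x‖) :=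
        (abs_add_le _ _).trans (add_le_add (hfb x) (hgb x))
    _ ≤ B * Real.exp (max b c * ‖x‖) + C * Real.exp (max b c * ‖x‖) := by
        gcongr
        exacts [le_max_left _ _, le_max_right _ _]
    _ = (B + C) * Real.exp (max b c * ‖x‖) := by ring

protected lemma mul (hf : HasExpGrowth f) (hg : HasExpGrowth g) :
    HasExpGrowth fun x => f x * g x := by
  obtain ⟨hfc, B, b, hB, hb, hfb⟩ := hf
  obtain ⟨hgc, C, c, hC, hc, hgb⟩ := hg
  refine ⟨hfc.mul hgc, B * C, b + c, by positivity, by positivity, fun x => ?_⟩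
  rw [abs_mul, add_mul, Real.exp_add, mul_mul_mul_comm]
  exact mul_le_mul (hfb x) (hgb x) (abs_nonneg _) (by positivity)

lemma of_linear_growth (hf : Continuous f) {A B : ℝ} (hA : 0 ≤ A) (hB : 0 ≤ B)
    (h : ∀ x, |f x| ≤ A + B * ‖x‖) : HasExpGrowth f := by
  refine ⟨hf, A + B, 1, by positivity, zero_le_one, fun x => (h x).trans ?_⟩
  have h0 : 1 ≤ Real.exp (1 * ‖x‖) := Real.one_le_exp (by positivity)
  have h1 : ‖x‖ ≤ Real.exp (1 * ‖x‖) := by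
    linarith [Real.add_one_le_exp ‖x‖, congrArg Real.exp (one_mul ‖x‖)]
  calc A + B * ‖x‖ ≤ A * Real.exp (1 * ‖x‖) + B * Real.exp (1 * ‖x‖) := by
        gcongr
        exact le_mul_of_one_le_right hA h0
    _ = (A + B) * Real.exp (1 * ‖x‖) := by ring

lemma comp_of_linear_growth (hf : HasExpGrowth f) {g : G → F} (hg : Continuous g) {A B : ℝ}
    (hB : 0 ≤ B) (h : ∀ x, ‖g x‖ ≤ A + B * ‖x‖) : HasExpGrowth fun x => f (g x) := by
  obtain ⟨hfc, C, c, hC, hc, hfb⟩ := hf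
  refine ⟨hfc.comp hg, C * Real.exp (c * A), c * B, by positivity, by positivity, fun x => ?_⟩
  calc |f (g x)| ≤ C * Real.exp (c * (A + B * ‖x‖)) := (hfb _).trans (by gcongr; exact h x)
    _ = C * Real.exp (c * A) * Real.exp (c * B * ‖x‖) := by
        rw [mul_assoc, ← Real.exp_add]; ring_nf

lemma exp_of_linear_growth (hf : Continuous f) {A B : ℝ} (hB : 0 ≤ B)
    (h : ∀ x, |f x| ≤ A + B * ‖x‖) : HasExpGrowth fun x => Real.exp (f x) := by
  refine ⟨Real.continuous_exp.comp hf, Real.exp A, B, (Real.exp_pos _).le, hB, fun x => ?_⟩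
  rw [Real.abs_exp, ← Real.exp_add]
  exact Real.exp_le_exp.2 ((le_abs_self _).trans (h x))

section Gaussian

variable {μ : ℝ} {v : ℝ≥0}

lemma integrable {f : ℝ → ℝ} (hf : HasExpGrowth f) : Integrable f (gaussianReal μ v) := by
  obtain ⟨hfc, B, b, -, -, hfb⟩ := hf
  exact ((integrable_exp_mul_abs_gaussianReal b).const_mul B).mono' hfc.aestronglyMeasurable
    (Eventually.of_forall hfb)

lemma integral_mul_stdGauss {f f' : ℝ → ℝ} (hf : HasExpGrowth f) (hf' : HasExpGrowth f')
    (hderiv : ∀ z, HasDerivAt f (f' z) z) : ∫ z, z * f z ∂stdGauss = ∫ z, f' z ∂stdGauss := by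
  have hid : HasExpGrowth fun z : ℝ => z :=
    of_linear_growth continuous_id le_rfl zero_le_one fun z => by simp
  simpa [stdGauss] using integral_sub_mul_gaussianReal (μ := 0) (v := 1) hderiv hf.integrable
    hf'.integrable (by simpa using (hid.mul hf).integrable)

lemma exists_integrable_bound {f : F × ℝ → ℝ} (hf : HasExpGrowth f) (x₀ : F) :
    ∃ bound : ℝ → ℝ, Integrable bound (gaussianReal μ v) ∧
      ∀ x ∈ Metric.ball x₀ 1, ∀ z, ‖f (x, z)‖ ≤ bound z := by
  obtain ⟨-, B, b, hB, hb, hfb⟩ := hf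
  refine ⟨fun z => B * Real.exp (b * (‖x₀‖ + 1)) * Real.exp (b * |z|),
    (integrable_exp_mul_abs_gaussianReal b).const_mul _, fun x hx z => (hfb _).trans ?_⟩
  simp only [mul_assoc, ← Real.exp_add, ← mul_add]
  have hx' : ‖x‖ ≤ ‖x₀‖ + 1 := by
    linarith [norm_le_norm_add_norm_sub' x x₀, mem_ball_iff_norm.1 hx]
  gcongr
  rw [Prod.norm_mk, Real.norm_eq_abs]
  exact (max_le_add_of_nonneg (norm_nonneg x) (abs_nonneg z)).trans (by gcongr)

lemma section_right {f : F × ℝ → ℝ} (hf : HasExpGrowth f) (x : F) :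
    HasExpGrowth fun z : ℝ => f (x, z) :=
  hf.comp_of_linear_growth (by fun_prop) (A := ‖x‖) zero_le_one fun z => by
    rw [one_mul]
    exact max_le_add_of_nonneg (norm_nonneg x) (norm_nonneg z)

lemma continuous_integral {f : F × ℝ → ℝ} (hf : HasExpGrowth f) :
    Continuous fun x => ∫ z, f (x, z) ∂gaussianReal μ v := by
  refine continuous_iff_continuousAt.2 fun x₀ => ?_
  obtain ⟨bound, hbound, hle⟩ := hf.exists_integrable_bound (μ := μ) (v := v) x₀
  have hc := hf.continuous
  refine continuousAt_of_dominated (bound := bound)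
    (Eventually.of_forall fun x => (hf.section_right x).continuous.aestronglyMeasurable) ?_ hbound
    (Eventually.of_forall fun z => by fun_prop)
  filter_upwards [Metric.ball_mem_nhds x₀ one_pos] with x hx
  exact Eventually.of_forall (hle x hx)

lemma hasDerivAt_integral {f f' : ℝ × ℝ → ℝ} (hf : HasExpGrowth f) (hf' : HasExpGrowth f')
    (hderiv : ∀ t z, HasDerivAt (fun s => f (s, z)) (f' (t, z)) t) (t : ℝ) :
    HasDerivAt (fun s => ∫ z, f (s, z) ∂gaussianReal μ v)
      (∫ z, f' (t, z) ∂gaussianReal μ v) t := by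
  obtain ⟨bound, hbound, hle⟩ := hf'.exists_integrable_bound (μ := μ) (v := v) t
  exact (hasDerivAt_integral_of_dominated_loc_of_deriv_le (Metric.ball_mem_nhds t one_pos)
    (Eventually.of_forall fun s => (hf.section_right s).continuous.aestronglyMeasurable)
    (hf.section_right t).integrable (hf'.section_right t).continuous.aestronglyMeasurable
    (Eventually.of_forall fun z s hs => hle s hs z) hbound
    (Eventually.of_forall fun z s _ => hderiv s z)).2

end Gaussian

end HasExpGrowth

/-! ### Smoothing along a Gaussian direction -/

section LineDerivative

variable {F : Type*} [NormedAddCommGroup F] [NormedSpace ℝ F] {Φ Φ' : F → ℝ}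

lemma hasDerivAt_comp_line {v : F} (h : ∀ p, HasLineDerivAt ℝ Φ (Φ' p) p v) (p : F) (t : ℝ) :
    HasDerivAt (fun s : ℝ => Φ (p + s • v)) (Φ' (p + t • v)) t := by
  have hshift : HasDerivAt (fun s : ℝ => Φ (p + t • v + (s - t) • v)) (Φ' (p + t • v)) t :=
    HasDerivAt.comp_sub_const t t (by rw [sub_self]; exact h (p + t • v))
  simpa only [add_assoc, ← add_smul, add_sub_cancel] using hshift

lemma hasDerivAt_comp_add_smul_add_smul {Φ₁ Φ₂ : F → ℝ} {v₁ v₂ : F}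
    (h₁ : ∀ p, HasLineDerivAt ℝ Φ (Φ₁ p) p v₁) (h₂ : ∀ p, HasLineDerivAt ℝ Φ (Φ₂ p) p v₂)
    (hc₁ : Continuous Φ₁) (hc₂ : Continuous Φ₂) {a b : ℝ → ℝ} {a' b' t : ℝ}
    (ha : HasDerivAt a a' t) (hb : HasDerivAt b b' t) (p : F) :
    HasDerivAt (fun s => Φ (p + a s • v₁ + b s • v₂))
      (a' * Φ₁ (p + a t • v₁ + b t • v₂) + b' * Φ₂ (p + a t • v₁ + b t • v₂)) t := by
  have hT : Continuous (ContinuousLinearMap.toSpanSingleton ℝ : ℝ → ℝ →L[ℝ] ℝ) :=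
    (ContinuousLinearMap.toSpanSingletonCLE (𝕜 := ℝ) (E := ℝ)).continuous
  have hpartial (x y : ℝ) : HasDerivAt (fun x => Φ (p + x • v₁ + y • v₂))
      (Φ₁ (p + x • v₁ + y • v₂)) x := by
    simpa only [add_right_comm] using hasDerivAt_comp_line h₁ (p + y • v₂) x
  have hjoint := (hasStrictFDerivAt_uncurry_coprod (u := (a t, b t))
    (f := fun x y => Φ (p + x • v₁ + y • v₂))
    (f₁ := fun x y => .toSpanSingleton ℝ (Φ₁ (p + x • v₁ + y • v₂)))
    (f₂ := fun x y => .toSpanSingleton ℝ (Φ₂ (p + x • v₁ + y • v₂)))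
    (Eventually.of_forall fun q => (hpartial q.1 q.2).hasFDerivAt)
    (Eventually.of_forall fun q => (hasDerivAt_comp_line h₂ (p + q.1 • v₁) q.2).hasFDerivAt)
    (hT.comp (by fun_prop)).continuousAt (hT.comp (by fun_prop)).continuousAt).hasFDerivAt
  refine (hjoint.comp_hasDerivAt (f := fun s => (a s, b s)) t (ha.prodMk hb)).congr_deriv ?_
  simp [Function.HasUncurry.uncurry]

end LineDerivative

/-- A Gaussian variable entering the interpolation with amplitude `sin (θ + phase)` in the
direction `vec`. At `θ = 0` the phase `0` switches the variable off and the phase `π / 2` switches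
it fully on; at `θ = π / 2` the roles are exchanged. -/
structure GaussDir (E : Type*) where
  phase : ℝ
  vec : E

namespace GaussDir

variable {E : Type*} (ℓ : GaussDir E)

/-- Half the derivative in `θ` of the squared amplitude. -/
def rate (θ : ℝ) : ℝ := Real.sin (θ + ℓ.phase) * Real.cos (θ + ℓ.phase)

lemma continuous_rate : Continuous ℓ.rate := by unfold rate; fun_prop

lemma abs_rate_le_one (θ : ℝ) : |ℓ.rate θ| ≤ 1 := by
  rw [rate, abs_mul]
  exact mul_le_one₀ (Real.abs_sin_le_one _) (abs_nonneg _) (Real.abs_cos_le_one _)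

variable [NormedAddCommGroup E] [NormedSpace ℝ E] {Φ Φ' : ℝ × E → ℝ}

/-- The displacement of the point `(θ, x)` per unit of the Gaussian variable. -/
def disp (θ : ℝ) : ℝ × E := Real.sin (θ + ℓ.phase) • (0, ℓ.vec)

/-- The average of `Φ` over the Gaussian variable. -/
def smooth (Φ : ℝ × E → ℝ) (p : ℝ × E) : ℝ := ∫ z, Φ (p + z • ℓ.disp p.1) ∂stdGauss

@[simp]
lemma fst_disp (θ : ℝ) : (ℓ.disp θ).1 = 0 := by simp [disp]

lemma norm_disp_le (θ : ℝ) : ‖ℓ.disp θ‖ ≤ ‖ℓ.vec‖ := by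
  rw [disp, norm_smul]
  simpa using mul_le_of_le_one_left (norm_nonneg ℓ.vec) (Real.abs_sin_le_one (θ + ℓ.phase))

lemma continuous_disp : Continuous ℓ.disp := by unfold disp; fun_prop

lemma hasExpGrowth_shift (hΦ : HasExpGrowth Φ) :
    HasExpGrowth fun p : (ℝ × E) × ℝ => Φ (p.1 + p.2 • ℓ.disp p.1.1) := by
  have hdisp := ℓ.continuous_disp
  refine hΦ.comp_of_linear_growth (by fun_prop) (A := 0) (B := 1 + ‖ℓ.vec‖) (by positivity)
    fun p => ?_
  calc ‖p.1 + p.2 • ℓ.disp p.1.1‖ ≤ ‖p.1‖ + ‖p.2‖ * ‖ℓ.vec‖ := by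
        refine (norm_add_le _ _).trans ?_
        rw [norm_smul]
        gcongr
        exact ℓ.norm_disp_le _
    _ ≤ ‖p‖ + ‖p‖ * ‖ℓ.vec‖ := by
        gcongr
        exacts [norm_fst_le p, norm_snd_le p]
    _ = 0 + (1 + ‖ℓ.vec‖) * ‖p‖ := by ring

lemma hasExpGrowth_shift_line (hΦ : HasExpGrowth Φ) (p v : ℝ × E) :
    HasExpGrowth fun q : ℝ × ℝ => Φ (p + q.1 • v + q.2 • ℓ.disp (p + q.1 • v).1) :=
  (ℓ.hasExpGrowth_shift hΦ).comp_of_linear_growth (g := fun q : ℝ × ℝ => (p + q.1 • v, q.2))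
    (by fun_prop) (A := ‖p‖) (B := ‖v‖ + 1) (by positivity) fun q => by
      have hline : ‖p + q.1 • v‖ ≤ ‖p‖ + ‖q‖ * ‖v‖ := by
        refine (norm_add_le _ _).trans ?_
        rw [norm_smul]
        gcongr
        exact norm_fst_le q
      have hsnd := norm_snd_le q
      have := mul_nonneg (norm_nonneg q) (norm_nonneg v)
      exact max_le (by linarith [norm_nonneg q]) (by dsimp only; linarith [norm_nonneg p])

lemma hasExpGrowth_shift_right (hΦ : HasExpGrowth Φ) (p : ℝ × E) :
    HasExpGrowth fun z : ℝ => Φ (p + z • ℓ.disp p.1) :=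
  (ℓ.hasExpGrowth_shift hΦ).section_right p

lemma continuous_smooth (hΦ : HasExpGrowth Φ) : Continuous (ℓ.smooth Φ) :=
  (ℓ.hasExpGrowth_shift hΦ).continuous_integral

lemma hasLineDerivAt_smooth_space {u : E} (hΦ : HasExpGrowth Φ) (hΦ' : HasExpGrowth Φ')
    (h : ∀ p, HasLineDerivAt ℝ Φ (Φ' p) p (0, u)) (p : ℝ × E) :
    HasLineDerivAt ℝ (ℓ.smooth Φ) (ℓ.smooth Φ' p) p (0, u) := by
  refine (HasExpGrowth.hasDerivAt_integral (ℓ.hasExpGrowth_shift_line hΦ p (0, u))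
    (ℓ.hasExpGrowth_shift_line hΦ' p (0, u)) (fun t z => ?_) 0).congr_deriv (by
      simp only [zero_smul, add_zero]; rfl)
  simpa [add_right_comm] using hasDerivAt_comp_line h (p + z • ℓ.disp p.1) t

lemma integral_mul_shift {Φ₁ Φ₂ : ℝ × E → ℝ} (h₁ : HasExpGrowth Φ₁) (h₂ : HasExpGrowth Φ₂)
    (h : ∀ p, HasLineDerivAt ℝ Φ₁ (Φ₂ p) p (0, ℓ.vec)) (p : ℝ × E) :
    ∫ z, z * Φ₁ (p + z • ℓ.disp p.1) ∂stdGauss = Real.sin (p.1 + ℓ.phase) * ℓ.smooth Φ₂ p := by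
  rw [smooth, ← integral_const_mul]
  have hconst : HasExpGrowth fun _ : ℝ => Real.sin (p.1 + ℓ.phase) :=
    .of_abs_le continuous_const fun _ => le_rfl
  refine (ℓ.hasExpGrowth_shift_right h₁ p).integral_mul_stdGauss
    (hconst.mul (ℓ.hasExpGrowth_shift_right h₂ p)) fun z => ?_
  exact hasDerivAt_comp_line (fun p => (h p).smul _) p z

/-- Gaussian integration by parts turns the derivative of the amplitude into a second
derivative. -/
lemma hasLineDerivAt_smooth_time {Φ₀ Φ₁ Φ₂ : ℝ × E → ℝ} (hΦ : HasExpGrowth Φ)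
    (hΦ₀ : HasExpGrowth Φ₀) (hΦ₁ : HasExpGrowth Φ₁) (hΦ₂ : HasExpGrowth Φ₂)
    (h₀ : ∀ p, HasLineDerivAt ℝ Φ (Φ₀ p) p (1, 0))
    (h₁ : ∀ p, HasLineDerivAt ℝ Φ (Φ₁ p) p (0, ℓ.vec))
    (h₂ : ∀ p, HasLineDerivAt ℝ Φ₁ (Φ₂ p) p (0, ℓ.vec)) (p : ℝ × E) :
    HasLineDerivAt ℝ (ℓ.smooth Φ) (ℓ.smooth Φ₀ p + ℓ.rate p.1 * ℓ.smooth Φ₂ p) p (1, 0) := by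
  have hcos : HasExpGrowth fun q : ℝ × ℝ => Real.cos (p.1 + q.1 + ℓ.phase) :=
    .of_abs_le (by fun_prop) fun _ => Real.abs_cos_le_one _
  have hid : HasExpGrowth fun q : ℝ × ℝ => q.2 :=
    .of_linear_growth (by fun_prop) le_rfl zero_le_one fun q => by simpa using norm_snd_le q
  refine (HasExpGrowth.hasDerivAt_integral (ℓ.hasExpGrowth_shift_line hΦ p (1, 0))
    ((ℓ.hasExpGrowth_shift_line hΦ₀ p (1, 0)).add
      (hcos.mul (hid.mul (ℓ.hasExpGrowth_shift_line hΦ₁ p (1, 0)))))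
      (fun t z => ?_) 0).congr_deriv ?_
  · have hamp : HasDerivAt (fun s => z * Real.sin (p.1 + s + ℓ.phase))
        (z * Real.cos (p.1 + t + ℓ.phase)) t := by
      simpa [add_right_comm] using
        ((((hasDerivAt_id t).const_add p.1).add_const ℓ.phase).sin).const_mul z
    convert hasDerivAt_comp_add_smul_add_smul h₀ h₁ hΦ₀.continuous hΦ₁.continuous
      (hasDerivAt_id t) hamp p using 1
    · simp [disp, mul_smul]
    · simp [disp, mul_smul]
      ring
  · simp only [zero_smul, add_zero]
    rw [smooth, rate, mul_comm (Real.sin _), mul_assoc, ← ℓ.integral_mul_shift hΦ₁ hΦ₂ h₂,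
      ← integral_const_mul, stdGauss, integral_add (ℓ.hasExpGrowth_shift_right hΦ₀ p).integrable]
    simpa using ((hcos.mul
      (hid.mul (ℓ.hasExpGrowth_shift_line hΦ₁ p (1, 0)))).section_right 0).integrable

end GaussDir

/-! ### Logarithmic means and tilted averages -/

/-- The Gaussian average of `g` when `m = 0`, and `m⁻¹ log ∫ exp (m g)` otherwise. -/
def gaussLogMean (m : ℝ) (g : ℝ → ℝ) : ℝ :=
  if m = 0 then ∫ z, g z ∂stdGauss else m⁻¹ * Real.log (∫ z, Real.exp (m * g z) ∂stdGauss)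

lemma gaussLogMean_const_add {m : ℝ} {g : ℝ → ℝ} (hg : Integrable g stdGauss)
    (hexp : Integrable (fun z => Real.exp (m * g z)) stdGauss) (c : ℝ) :
    gaussLogMean m (fun z => c + g z) = c + gaussLogMean m g := by
  unfold gaussLogMean
  split_ifs with hm
  · simp [integral_add (integrable_const c) hg]
  · simp only [mul_add, Real.exp_add, integral_const_mul]
    rw [Real.log_mul (Real.exp_pos _).ne' (integral_exp_pos hexp).ne', Real.log_exp, mul_add,
      inv_mul_cancel_left₀ hm]

lemma gaussLogMean_const (m c : ℝ) : gaussLogMean m (fun _ => c) = c := by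
  simpa [gaussLogMean] using gaussLogMean_const_add (m := m) (g := fun _ => 0) (by simp) (by simp) c

namespace GaussDir

variable {E : Type*} (ℓ : GaussDir E) [NormedAddCommGroup E] [NormedSpace ℝ E]
  {m : ℝ} {V X Y : ℝ × E → ℝ}

/-- The law of the Gaussian variable tilted by the density `exp (m V)`. -/
def tilt (m : ℝ) (V : ℝ × E → ℝ) (p : ℝ × E) : Measure ℝ :=
  stdGauss.tilted fun z => m * V (p + z • ℓ.disp p.1)

/-- The average of `X` over the Gaussian variable under the tilted law. -/
def tiltedMean (m : ℝ) (V X : ℝ × E → ℝ) (p : ℝ × E) : ℝ :=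
  ∫ z, X (p + z • ℓ.disp p.1) ∂ℓ.tilt m V p

lemma smooth_const_mul (c : ℝ) (X : ℝ × E → ℝ) (p : ℝ × E) :
    ℓ.smooth (fun p => c * X p) p = c * ℓ.smooth X p :=
  integral_const_mul _ _

lemma smooth_exp_pos (hV : HasExpGrowth fun p => Real.exp (m * V p)) (p : ℝ × E) :
    0 < ℓ.smooth (fun p => Real.exp (m * V p)) p :=
  integral_exp_pos (ℓ.hasExpGrowth_shift_right hV p).integrable

lemma tiltedMean_eq_div (m : ℝ) (V X : ℝ × E → ℝ) (p : ℝ × E) :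
    ℓ.tiltedMean m V X p =
      ℓ.smooth (fun p => X p * Real.exp (m * V p)) p /
        ℓ.smooth (fun p => Real.exp (m * V p)) p := by
  rw [tiltedMean, tilt, integral_tilted, smooth, smooth, ← integral_div]
  refine integral_congr_ae (Eventually.of_forall fun z => ?_)
  simp only [smul_eq_mul]
  ring

lemma tiltedMean_zero (V X : ℝ × E → ℝ) (p : ℝ × E) : ℓ.tiltedMean 0 V X p = ℓ.smooth X p := by
  simp [tiltedMean, tilt, smooth]

lemma isProbabilityMeasure_tilt (hV : HasExpGrowth fun p => Real.exp (m * V p)) (p : ℝ × E) :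
    IsProbabilityMeasure (ℓ.tilt m V p) :=
  isProbabilityMeasure_tilted (ℓ.hasExpGrowth_shift_right hV p).integrable

lemma integrable_tilt (hV : HasExpGrowth fun p => Real.exp (m * V p)) (hX : HasExpGrowth X)
    (p : ℝ × E) : Integrable (fun z => X (p + z • ℓ.disp p.1)) (ℓ.tilt m V p) := by
  have h := (ℓ.hasExpGrowth_shift_right hV p).integrable (μ := 0) (v := 1)
  exact (integrable_tilted_iff h _).2 (ℓ.hasExpGrowth_shift_right (hV.mul hX) p).integrable

lemma continuous_tiltedMean (hV : HasExpGrowth fun p => Real.exp (m * V p)) (hX : HasExpGrowth X) :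
    Continuous (ℓ.tiltedMean m V X) := by
  rw [funext (ℓ.tiltedMean_eq_div m V X)]
  exact (ℓ.continuous_smooth (hX.mul hV)).div (ℓ.continuous_smooth hV)
    fun p => (ℓ.smooth_exp_pos hV p).ne'

lemma tiltedMean_add (hV : HasExpGrowth fun p => Real.exp (m * V p)) (hX : HasExpGrowth X)
    (hY : HasExpGrowth Y) (p : ℝ × E) :
    ℓ.tiltedMean m V (fun p => X p + Y p) p = ℓ.tiltedMean m V X p + ℓ.tiltedMean m V Y p :=
  integral_add (ℓ.integrable_tilt hV hX p) (ℓ.integrable_tilt hV hY p)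

lemma tiltedMean_rate_mul (ℓ' : GaussDir E) (p : ℝ × E) :
    ℓ.tiltedMean m V (fun p => ℓ'.rate p.1 * X p) p = ℓ'.rate p.1 * ℓ.tiltedMean m V X p := by
  simp [tiltedMean, integral_const_mul]

lemma tiltedMean_le (hV : HasExpGrowth fun p => Real.exp (m * V p)) (hX : HasExpGrowth X) {c : ℝ}
    {p : ℝ × E} (h : ∀ x, X (p.1, x) ≤ c) : ℓ.tiltedMean m V X p ≤ c := by
  have := ℓ.isProbabilityMeasure_tilt hV p
  calc ℓ.tiltedMean m V X p ≤ ∫ _, c ∂ℓ.tilt m V p :=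
        integral_mono (ℓ.integrable_tilt hV hX p) (integrable_const c) fun z => by
          have hfst : (p + z • ℓ.disp p.1).1 = p.1 := by simp
          rw [← Prod.mk.eta (p := p + z • ℓ.disp p.1), hfst]
          exact h _
    _ = c := by simp

lemma abs_tiltedMean_le (hV : HasExpGrowth fun p => Real.exp (m * V p)) {C : ℝ}
    (h : ∀ p, |X p| ≤ C) (p : ℝ × E) : |ℓ.tiltedMean m V X p| ≤ C := by
  have := ℓ.isProbabilityMeasure_tilt hV p
  simpa [tiltedMean] using norm_integral_le_of_norm_le_const (μ := ℓ.tilt m V p)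
    (f := fun z => X (p + z • ℓ.disp p.1)) (Eventually.of_forall fun z => h (p + z • ℓ.disp p.1))

lemma hasLineDerivAt_log_smooth_exp {Z' : ℝ} {p v : ℝ × E}
    (hV : HasExpGrowth fun p => Real.exp (m * V p))
    (h : HasLineDerivAt ℝ (ℓ.smooth fun p => Real.exp (m * V p)) (m * Z') p v) (hm : m ≠ 0) :
    HasLineDerivAt ℝ (fun p => m⁻¹ * Real.log (ℓ.smooth (fun p => Real.exp (m * V p)) p))
      (Z' / ℓ.smooth (fun p => Real.exp (m * V p)) p) p v := by
  refine ((HasDerivAt.log h ?_).const_mul m⁻¹).congr_deriv ?_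
  · simpa using (ℓ.smooth_exp_pos hV p).ne'
  · rw [zero_smul, add_zero]
    field_simp

lemma hasLineDerivAt_mul_exp {V' X' : ℝ × E → ℝ} {v : ℝ × E}
    (h : ∀ p, HasLineDerivAt ℝ V (V' p) p v) (hX : ∀ p, HasLineDerivAt ℝ X (X' p) p v) (p : ℝ × E) :
    HasLineDerivAt ℝ (fun p => X p * Real.exp (m * V p))
      ((X' p + m * (X p * V' p)) * Real.exp (m * V p)) p v :=
  (HasDerivAt.mul (hX p) (HasDerivAt.const_mul m (h p)).exp).congr_deriv (by
    rw [zero_smul, add_zero]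
    ring)

lemma hasLineDerivAt_exp {V' : ℝ × E → ℝ} {v : ℝ × E}
    (h : ∀ p, HasLineDerivAt ℝ V (V' p) p v) (p : ℝ × E) :
    HasLineDerivAt ℝ (fun p => Real.exp (m * V p)) (m * (V' p * Real.exp (m * V p))) p v :=
  (HasDerivAt.const_mul m (h p)).exp.congr_deriv (by
    rw [zero_smul, add_zero]
    ring)

lemma hasLineDerivAt_smooth_exp {V' : ℝ × E → ℝ} {u : E}
    (hV : HasExpGrowth fun p => Real.exp (m * V p)) (hV' : HasExpGrowth V')
    (h : ∀ p, HasLineDerivAt ℝ V (V' p) p (0, u)) (p : ℝ × E) :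
    HasLineDerivAt ℝ (ℓ.smooth fun p => Real.exp (m * V p))
      (m * ℓ.smooth (fun p => V' p * Real.exp (m * V p)) p) p (0, u) := by
  have hm : HasExpGrowth fun _ : ℝ × E => m := .of_abs_le continuous_const fun _ => le_rfl
  rw [← smooth_const_mul]
  exact ℓ.hasLineDerivAt_smooth_space hV (hm.mul (hV'.mul hV)) (hasLineDerivAt_exp h) p

lemma hasLineDerivAt_tiltedMean {V' X' : ℝ × E → ℝ} {u : E}
    (hV : HasExpGrowth fun p => Real.exp (m * V p)) (hV' : HasExpGrowth V') (hX : HasExpGrowth X)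
    (hX' : HasExpGrowth X') (h : ∀ p, HasLineDerivAt ℝ V (V' p) p (0, u))
    (hXX' : ∀ p, HasLineDerivAt ℝ X (X' p) p (0, u)) (p : ℝ × E) :
    HasLineDerivAt ℝ (ℓ.tiltedMean m V X) (ℓ.tiltedMean m V (fun p => X' p + m * (X p * V' p)) p -
      m * (ℓ.tiltedMean m V X p * ℓ.tiltedMean m V V' p)) p (0, u) := by
  have hm : HasExpGrowth fun _ : ℝ × E => m := .of_abs_le continuous_const fun _ => le_rfl
  have hZpos := (ℓ.smooth_exp_pos hV p).ne'
  have hnum := ℓ.hasLineDerivAt_smooth_space (hX.mul hV) ((hX'.add (hm.mul (hX.mul hV'))).mul hV)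
    (hasLineDerivAt_mul_exp h hXX') p
  have hden := ℓ.hasLineDerivAt_smooth_exp hV hV' h p
  rw [funext (ℓ.tiltedMean_eq_div m V X)]
  refine (HasDerivAt.div hnum hden (by simpa using hZpos)).congr_deriv ?_
  simp only [zero_smul, add_zero, tiltedMean_eq_div]
  field_simp

end GaussDir

/-! ### Jets and their Gaussian averages -/

/-- A function `val` of `(θ, x)` together with its derivative `dt` in `θ`, its gradient in `x` and
its second derivatives `hess u` along the vectors `u`. Iterated Gaussian log-means are handled as
jets because the derivatives of one log-mean are tilted averages of those of the previous one. -/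
structure Jet (ι : Type*) where
  val : ℝ × (ι → ℝ) → ℝ
  dt : ℝ × (ι → ℝ) → ℝ
  grad : ℝ × (ι → ℝ) → ι → ℝ
  hess : (ι → ℝ) → ℝ × (ι → ℝ) → ℝ

namespace Jet

variable {ι : Type*} [Fintype ι] (J : Jet ι) {m : ℝ} {ℓ : GaussDir (ι → ℝ)}

/-- The derivative of `J.val` along `u`. -/
def slope (u : ι → ℝ) (p : ℝ × (ι → ℝ)) : ℝ := J.grad p ⬝ᵥ u

/-- The second derivative of `exp (m * J.val) / m` along `u`, divided by `exp (m * J.val)`. -/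
def curv (m : ℝ) (u : ι → ℝ) (p : ℝ × (ι → ℝ)) : ℝ := J.hess u p + m * J.slope u p ^ 2

/-- The fields of `J` are the derivatives of `J.val`, with the regularity needed to average them,
and the gradient is a vector of probability weights. -/
structure IsRegular : Prop where
  hasLineDerivAt_dt : ∀ p, HasLineDerivAt ℝ J.val (J.dt p) p (1, 0)
  hasLineDerivAt_slope : ∀ u p, HasLineDerivAt ℝ J.val (J.slope u p) p (0, u)
  hasLineDerivAt_hess : ∀ u p, HasLineDerivAt ℝ (J.slope u) (J.hess u p) p (0, u)
  continuous_dt : Continuous J.dt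
  continuous_grad : Continuous J.grad
  continuous_hess : ∀ u, Continuous (J.hess u)
  exists_abs_dt_le : ∃ C, ∀ p, |J.dt p| ≤ C
  exists_abs_hess_le : ∀ u, ∃ C, ∀ p, |J.hess u p| ≤ C
  grad_mem : ∀ p, J.grad p ∈ stdSimplex ℝ ι

/-- The jet of the log-mean of `J.val` over the Gaussian variable of `ℓ`. -/
def average (m : ℝ) (ℓ : GaussDir (ι → ℝ)) : Jet ι where
  val p := gaussLogMean m fun z => J.val (p + z • ℓ.disp p.1)
  dt p := ℓ.tiltedMean m J.val J.dt p + ℓ.rate p.1 * ℓ.tiltedMean m J.val (J.curv m ℓ.vec) p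
  grad p i := ℓ.tiltedMean m J.val (fun p => J.grad p i) p
  hess u p := ℓ.tiltedMean m J.val (J.curv m u) p - m * ℓ.tiltedMean m J.val (J.slope u) p ^ 2

end Jet

lemma abs_dotProduct_le_of_mem_stdSimplex {ι : Type*} [Fintype ι] {w u : ι → ℝ} {C : ℝ}
    (hw : w ∈ stdSimplex ℝ ι) (hu : ∀ i, |u i| ≤ C) : |w ⬝ᵥ u| ≤ C :=
  calc |∑ i, w i * u i| ≤ ∑ i, w i * C :=
        (Finset.abs_sum_le_sum_abs _ _).trans (Finset.sum_le_sum fun i _ => by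
          rw [abs_mul, abs_of_nonneg (hw.1 i)]
          exact mul_le_mul_of_nonneg_left (hu i) (hw.1 i))
    _ = C := by rw [← Finset.sum_mul, hw.2, one_mul]

namespace Jet.IsRegular

variable {ι : Type*} [Fintype ι] {J : Jet ι}

lemma abs_slope_le (h : J.IsRegular) (u : ι → ℝ) (p : ℝ × (ι → ℝ)) : |J.slope u p| ≤ ‖u‖ :=
  abs_dotProduct_le_of_mem_stdSimplex (h.grad_mem p) (norm_le_pi_norm u)

lemma exists_abs_curv_le (h : J.IsRegular) (m : ℝ) (u : ι → ℝ) : ∃ C, ∀ p, |J.curv m u p| ≤ C := by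
  obtain ⟨C, hC⟩ := h.exists_abs_hess_le u
  refine ⟨C + |m| * ‖u‖ ^ 2, fun p => (abs_add_le _ _).trans (add_le_add (hC p) ?_)⟩
  rw [abs_mul, abs_pow]
  gcongr
  exact h.abs_slope_le u p

lemma continuous_slope (h : J.IsRegular) (u : ι → ℝ) : Continuous (J.slope u) :=
  h.continuous_grad.dotProduct continuous_const

lemma hasExpGrowth_dt (h : J.IsRegular) : HasExpGrowth J.dt :=
  .of_abs_le h.continuous_dt h.exists_abs_dt_le.choose_spec

lemma hasExpGrowth_slope (h : J.IsRegular) (u : ι → ℝ) : HasExpGrowth (J.slope u) :=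
  .of_abs_le (h.continuous_slope u) (h.abs_slope_le u)

lemma hasExpGrowth_grad (h : J.IsRegular) (i : ι) : HasExpGrowth fun p => J.grad p i := by
  classical
  have hgrad : (fun p => J.grad p i) = J.slope (Pi.single i 1) := by
    funext p
    rw [Jet.slope, dotProduct_single_one]
  exact hgrad ▸ h.hasExpGrowth_slope (Pi.single i 1)

lemma hasExpGrowth_hess (h : J.IsRegular) (u : ι → ℝ) : HasExpGrowth (J.hess u) :=
  .of_abs_le (h.continuous_hess u) (h.exists_abs_hess_le u).choose_spec

lemma hasExpGrowth_curv (h : J.IsRegular) (m : ℝ) (u : ι → ℝ) : HasExpGrowth (J.curv m u) :=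
  .of_abs_le ((h.continuous_hess u).add (continuous_const.mul ((h.continuous_slope u).pow 2)))
    (h.exists_abs_curv_le m u).choose_spec

lemma exists_lipschitzWith (h : J.IsRegular) : ∃ C, LipschitzWith C J.val := by
  obtain ⟨C, hC⟩ := h.exists_abs_dt_le
  have hC0 : 0 ≤ C := (abs_nonneg _).trans (hC 0)
  refine ⟨⟨C + 1, by positivity⟩, .of_dist_le_mul fun p q => ?_⟩
  have htime : |J.val p - J.val (q.1, p.2)| ≤ C * ‖p.1 - q.1‖ := by
    have := convex_univ.norm_image_sub_le_of_norm_hasDerivWithin_le (x := 0) (y := p.1 - q.1)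
      (fun s _ => (hasDerivAt_comp_line h.hasLineDerivAt_dt (q.1, p.2) s).hasDerivWithinAt)
      (fun s _ => hC _) trivial trivial
    simpa using this
  have hspace : |J.val (q.1, p.2) - J.val q| ≤ ‖p.2 - q.2‖ := by
    have := convex_univ.norm_image_sub_le_of_norm_hasDerivWithin_le (x := (0 : ℝ)) (y := 1)
      (fun s _ => (hasDerivAt_comp_line (h.hasLineDerivAt_slope (p.2 - q.2)) q s).hasDerivWithinAt)
      (fun s _ => h.abs_slope_le _ _) trivial trivial
    have hend : q + (0, p.2 - q.2) = (q.1, p.2) := Prod.ext (by simp) (by simp)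
    simpa [hend] using this
  rw [Real.dist_eq, dist_eq_norm]
  calc |J.val p - J.val q| ≤ C * ‖p.1 - q.1‖ + ‖p.2 - q.2‖ :=
        (abs_sub_le _ _ _).trans (add_le_add htime hspace)
    _ ≤ C * ‖p - q‖ + ‖p - q‖ := by
        gcongr
        exacts [norm_fst_le (p - q), norm_snd_le (p - q)]
    _ = (C + 1) * ‖p - q‖ := by ring

lemma continuous_val (h : J.IsRegular) : Continuous J.val :=
  h.exists_lipschitzWith.choose_spec.continuous

lemma exists_abs_val_le (h : J.IsRegular) : ∃ A B, 0 ≤ B ∧ ∀ p, |J.val p| ≤ A + B * ‖p‖ := by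
  obtain ⟨C, hC⟩ := h.exists_lipschitzWith
  refine ⟨|J.val 0|, C, C.2, fun p => ?_⟩
  have := hC.dist_le_mul p 0
  rw [Real.dist_eq, dist_zero_right] at this
  linarith [abs_sub_abs_le_abs_sub (J.val p) (J.val 0)]

lemma hasExpGrowth_val (h : J.IsRegular) : HasExpGrowth J.val := by
  obtain ⟨A, B, hB, hAB⟩ := h.exists_abs_val_le
  have hA : 0 ≤ A := by simpa using (abs_nonneg _).trans (hAB 0)
  exact .of_linear_growth h.continuous_val hA hB hAB

lemma hasExpGrowth_exp_val (h : J.IsRegular) (m : ℝ) :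
    HasExpGrowth fun p => Real.exp (m * J.val p) := by
  obtain ⟨A, B, hB, hAB⟩ := h.exists_abs_val_le
  refine .exp_of_linear_growth (continuous_const.mul h.continuous_val) (A := |m| * A)
    (B := |m| * B) (by positivity) fun p => ?_
  rw [abs_mul, mul_assoc, ← mul_add]
  exact mul_le_mul_of_nonneg_left (hAB p) (abs_nonneg m)

end Jet.IsRegular

namespace Jet

variable {ι : Type*} [Fintype ι] {J : Jet ι} {m : ℝ} {ℓ : GaussDir (ι → ℝ)}

lemma average_dt (m : ℝ) (ℓ : GaussDir (ι → ℝ)) (p : ℝ × (ι → ℝ)) :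
    (J.average m ℓ).dt p =
      ℓ.tiltedMean m J.val J.dt p + ℓ.rate p.1 * ℓ.tiltedMean m J.val (J.curv m ℓ.vec) p :=
  rfl

lemma average_hess (m : ℝ) (ℓ : GaussDir (ι → ℝ)) (u : ι → ℝ) (p : ℝ × (ι → ℝ)) :
    (J.average m ℓ).hess u p =
      ℓ.tiltedMean m J.val (J.curv m u) p - m * ℓ.tiltedMean m J.val (J.slope u) p ^ 2 :=
  rfl

lemma average_val_of_ne_zero (hm : m ≠ 0) :
    (J.average m ℓ).val =
      fun p => m⁻¹ * Real.log (ℓ.smooth (fun p => Real.exp (m * J.val p)) p) := by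
  funext p
  exact if_neg hm

lemma average_val_zero : (J.average 0 ℓ).val = ℓ.smooth J.val := by
  funext p
  exact if_pos rfl

lemma slope_average (h : J.IsRegular) (u : ι → ℝ) :
    (J.average m ℓ).slope u = ℓ.tiltedMean m J.val (J.slope u) := by
  funext p
  simp only [slope, average, dotProduct, GaussDir.tiltedMean, ← integral_mul_const]
  exact (integral_finsetSum _ fun i _ => (ℓ.integrable_tilt (h.hasExpGrowth_exp_val m)
    (h.hasExpGrowth_grad i) p).mul_const (u i)).symm

lemma curv_average (h : J.IsRegular) (u : ι → ℝ) :
    (J.average m ℓ).curv m u = ℓ.tiltedMean m J.val (J.curv m u) := by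
  funext p
  rw [curv, slope_average h, average, sub_add_cancel]

lemma average_hasLineDerivAt_slope (h : J.IsRegular) (m : ℝ) (ℓ : GaussDir (ι → ℝ)) (u : ι → ℝ)
    (p : ℝ × (ι → ℝ)) :
    HasLineDerivAt ℝ (J.average m ℓ).val ((J.average m ℓ).slope u p) p (0, u) := by
  rw [slope_average h]
  rcases eq_or_ne m 0 with rfl | hm
  · rw [average_val_zero, ℓ.tiltedMean_zero]
    exact ℓ.hasLineDerivAt_smooth_space h.hasExpGrowth_val (h.hasExpGrowth_slope u)
      (h.hasLineDerivAt_slope u) p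
  · rw [average_val_of_ne_zero hm, ℓ.tiltedMean_eq_div]
    exact ℓ.hasLineDerivAt_log_smooth_exp (h.hasExpGrowth_exp_val m)
      (ℓ.hasLineDerivAt_smooth_exp (h.hasExpGrowth_exp_val m) (h.hasExpGrowth_slope u)
        (h.hasLineDerivAt_slope u) p) hm

lemma average_hasLineDerivAt_hess (h : J.IsRegular) (m : ℝ) (ℓ : GaussDir (ι → ℝ)) (u : ι → ℝ)
    (p : ℝ × (ι → ℝ)) :
    HasLineDerivAt ℝ ((J.average m ℓ).slope u) ((J.average m ℓ).hess u p) p (0, u) := by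
  have hcurv : J.curv m u = fun p => J.hess u p + m * (J.slope u p * J.slope u p) := by
    funext p
    rw [curv, sq]
  rw [average_hess, slope_average h, sq, hcurv]
  exact ℓ.hasLineDerivAt_tiltedMean (h.hasExpGrowth_exp_val m) (h.hasExpGrowth_slope u)
    (h.hasExpGrowth_slope u) (h.hasExpGrowth_hess u) (h.hasLineDerivAt_slope u)
    (h.hasLineDerivAt_hess u) p

lemma average_hasLineDerivAt_dt (h : J.IsRegular) (m : ℝ) (ℓ : GaussDir (ι → ℝ))
    (p : ℝ × (ι → ℝ)) :
    HasLineDerivAt ℝ (J.average m ℓ).val ((J.average m ℓ).dt p) p (1, 0) := by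
  rcases eq_or_ne m 0 with rfl | hm
  · rw [average_val_zero, average_dt, ℓ.tiltedMean_zero, ℓ.tiltedMean_zero]
    have hcurv : J.curv 0 ℓ.vec = J.hess ℓ.vec := by funext p; simp [curv]
    rw [hcurv]
    exact ℓ.hasLineDerivAt_smooth_time h.hasExpGrowth_val h.hasExpGrowth_dt
      (h.hasExpGrowth_slope _) (h.hasExpGrowth_hess _) h.hasLineDerivAt_dt
      (h.hasLineDerivAt_slope _) (h.hasLineDerivAt_hess _) p
  · have hexp := h.hasExpGrowth_exp_val m
    have hm' : HasExpGrowth fun _ : ℝ × (ι → ℝ) => m := .of_abs_le continuous_const fun _ => le_rfl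
    have htime := ℓ.hasLineDerivAt_smooth_time hexp (hm'.mul (h.hasExpGrowth_dt.mul hexp))
      (hm'.mul ((h.hasExpGrowth_slope ℓ.vec).mul hexp))
      (hm'.mul ((h.hasExpGrowth_curv m ℓ.vec).mul hexp))
      (GaussDir.hasLineDerivAt_exp h.hasLineDerivAt_dt)
      (GaussDir.hasLineDerivAt_exp (h.hasLineDerivAt_slope _))
      (fun p => ((GaussDir.hasLineDerivAt_mul_exp (m := m) (h.hasLineDerivAt_slope ℓ.vec)
        (h.hasLineDerivAt_hess ℓ.vec) p).const_mul m).congr_deriv (by rw [curv, sq])) p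
    rw [ℓ.smooth_const_mul, ℓ.smooth_const_mul, mul_left_comm, ← mul_add] at htime
    rw [average_val_of_ne_zero hm]
    refine (ℓ.hasLineDerivAt_log_smooth_exp hexp htime hm).congr_deriv ?_
    rw [average_dt, ℓ.tiltedMean_eq_div, ℓ.tiltedMean_eq_div, add_div, mul_div_assoc]

lemma average_grad_mem (h : J.IsRegular) (m : ℝ) (ℓ : GaussDir (ι → ℝ)) (p : ℝ × (ι → ℝ)) :
    (J.average m ℓ).grad p ∈ stdSimplex ℝ ι := by
  have := ℓ.isProbabilityMeasure_tilt (h.hasExpGrowth_exp_val m) p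
  refine ⟨fun i => integral_nonneg fun z => (h.grad_mem _).1 i, ?_⟩
  have hsum := congrFun (slope_average (m := m) (ℓ := ℓ) h 1) p
  simp only [slope, dotProduct_one, GaussDir.tiltedMean, (h.grad_mem _).2] at hsum
  simpa using hsum

lemma IsRegular.average (h : J.IsRegular) (m : ℝ) (ℓ : GaussDir (ι → ℝ)) :
    (J.average m ℓ).IsRegular where
  hasLineDerivAt_dt := average_hasLineDerivAt_dt h m ℓ
  hasLineDerivAt_slope := average_hasLineDerivAt_slope h m ℓ
  hasLineDerivAt_hess := average_hasLineDerivAt_hess h m ℓ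
  continuous_dt := (ℓ.continuous_tiltedMean (h.hasExpGrowth_exp_val m) h.hasExpGrowth_dt).add
    ((ℓ.continuous_rate.comp continuous_fst).mul
      (ℓ.continuous_tiltedMean (h.hasExpGrowth_exp_val m) (h.hasExpGrowth_curv m ℓ.vec)))
  continuous_grad := continuous_pi fun i =>
    ℓ.continuous_tiltedMean (h.hasExpGrowth_exp_val m) (h.hasExpGrowth_grad i)
  continuous_hess u :=
    (ℓ.continuous_tiltedMean (h.hasExpGrowth_exp_val m) (h.hasExpGrowth_curv m u)).sub
      (continuous_const.mul ((ℓ.continuous_tiltedMean (h.hasExpGrowth_exp_val m)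
        (h.hasExpGrowth_slope u)).pow 2))
  exists_abs_dt_le := by
    obtain ⟨A, hA⟩ := h.exists_abs_dt_le
    obtain ⟨B, hB⟩ := h.exists_abs_curv_le m ℓ.vec
    refine ⟨A + 1 * B, fun p => (abs_add_le _ _).trans ?_⟩
    rw [abs_mul]
    gcongr
    exacts [ℓ.abs_tiltedMean_le (h.hasExpGrowth_exp_val m) hA p, ℓ.abs_rate_le_one _,
      ℓ.abs_tiltedMean_le (h.hasExpGrowth_exp_val m) hB p]
  exists_abs_hess_le u := by
    obtain ⟨B, hB⟩ := h.exists_abs_curv_le m u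
    refine ⟨B + |m| * ‖u‖ ^ 2, fun p => (abs_sub _ _).trans ?_⟩
    rw [abs_mul, abs_pow]
    gcongr
    exacts [ℓ.abs_tiltedMean_le (h.hasExpGrowth_exp_val m) hB p,
      ℓ.abs_tiltedMean_le (h.hasExpGrowth_exp_val m) (h.abs_slope_le u) p]
  grad_mem := average_grad_mem h m ℓ

end Jet

namespace GaussDir

variable {E : Type*} [NormedAddCommGroup E] (ℓ : GaussDir E)

lemma hasExpGrowth_rate : HasExpGrowth fun p : ℝ × E => ℓ.rate p.1 :=
  .of_abs_le (ℓ.continuous_rate.comp continuous_fst) fun p => ℓ.abs_rate_le_one p.1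

end GaussDir

namespace Jet

variable {ι : Type*} [Fintype ι] {J : Jet ι}

/-- The jet obtained by taking log-means over the Gaussian variables of a list, one at a time. -/
def averageList (m : ℝ) (L : List (GaussDir (ι → ℝ))) (J : Jet ι) : Jet ι :=
  L.foldl (fun J ℓ => J.average m ℓ) J

/-- The `θ`-derivative that `J` acquires once the Gaussian variables of `P` are averaged out,
before tilting: each variable contributes its rate times a second derivative. -/
def drift (J : Jet ι) (m : ℝ) (P : List (GaussDir (ι → ℝ))) (p : ℝ × (ι → ℝ)) : ℝ :=
  J.dt p + (P.map fun ℓ => ℓ.rate p.1 * J.curv m ℓ.vec p).sum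

lemma drift_nil (m : ℝ) (p : ℝ × (ι → ℝ)) : J.drift m [] p = J.dt p := by simp [drift]

lemma drift_cons (m : ℝ) (ℓ : GaussDir (ι → ℝ)) (P : List (GaussDir (ι → ℝ))) (p : ℝ × (ι → ℝ)) :
    J.drift m (ℓ :: P) p = J.drift m P p + ℓ.rate p.1 * J.curv m ℓ.vec p := by
  simp only [drift, List.map_cons, List.sum_cons]
  ring

lemma drift_eq_drift_sub (m m' : ℝ) (P : List (GaussDir (ι → ℝ))) (p : ℝ × (ι → ℝ)) :
    J.drift m' P p =
      J.drift m P p - (m - m') * (P.map fun ℓ => ℓ.rate p.1 * J.slope ℓ.vec p ^ 2).sum := by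
  induction P with
  | nil => simp [drift_nil]
  | cons ℓ P ih =>
    simp only [drift_cons, curv, ih, List.map_cons, List.sum_cons]
    ring

lemma IsRegular.hasExpGrowth_drift (h : J.IsRegular) (m : ℝ) (P : List (GaussDir (ι → ℝ))) :
    HasExpGrowth (J.drift m P) := by
  induction P with
  | nil => simpa only [funext (drift_nil m)] using h.hasExpGrowth_dt
  | cons ℓ P ih =>
    simpa only [funext (drift_cons m ℓ P)] using
      ih.add (ℓ.hasExpGrowth_rate.mul (h.hasExpGrowth_curv m ℓ.vec))

lemma drift_average (h : J.IsRegular) (m : ℝ) (ℓ : GaussDir (ι → ℝ))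
    (P : List (GaussDir (ι → ℝ))) (p : ℝ × (ι → ℝ)) :
    (J.average m ℓ).drift m P p = ℓ.tiltedMean m J.val (J.drift m (ℓ :: P)) p := by
  have hterm (ℓ' : GaussDir (ι → ℝ)) : HasExpGrowth fun p => ℓ'.rate p.1 * J.curv m ℓ'.vec p :=
    ℓ'.hasExpGrowth_rate.mul (h.hasExpGrowth_curv m ℓ'.vec)
  induction P with
  | nil =>
    rw [funext (drift_cons m ℓ []), drift_nil, average_dt,
      ℓ.tiltedMean_add (h.hasExpGrowth_exp_val m) (h.hasExpGrowth_drift m []) (hterm ℓ),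
      ℓ.tiltedMean_rate_mul, funext (drift_nil m)]
  | cons ℓ' P ih =>
    have hswap : J.drift m (ℓ :: ℓ' :: P) =
        fun p => J.drift m (ℓ :: P) p + ℓ'.rate p.1 * J.curv m ℓ'.vec p := by
      funext p
      simp only [drift_cons]
      ring
    rw [hswap, drift_cons, curv_average h, ih,
      ℓ.tiltedMean_add (h.hasExpGrowth_exp_val m) (h.hasExpGrowth_drift m _) (hterm ℓ'),
      ℓ.tiltedMean_rate_mul]

lemma IsRegular.averageList (h : J.IsRegular) (m : ℝ) (L : List (GaussDir (ι → ℝ))) :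
    (J.averageList m L).IsRegular := by
  induction L generalizing J with
  | nil => exact h
  | cons ℓ _ ih => exact ih (h.average m ℓ)

lemma drift_averageList_le (h : J.IsRegular) {m θ κ : ℝ} {L P : List (GaussDir (ι → ℝ))}
    (hκ : ∀ x, J.drift m (L ++ P) (θ, x) ≤ κ) (x : ι → ℝ) :
    (J.averageList m L).drift m P (θ, x) ≤ κ := by
  induction L generalizing J x with
  | nil => exact hκ x
  | cons ℓ L ih =>
    refine ih (h.average m ℓ) (fun x => ?_) x
    rw [drift_average h]
    exact ℓ.tiltedMean_le (h.hasExpGrowth_exp_val m) (h.hasExpGrowth_drift m _) hκ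

end Jet

section LogSumExp

variable {ι : Type*} [Fintype ι]

/-- The Gibbs weights `exp x i / ∑ j, exp x j`. -/
def softmax (x : ι → ℝ) (i : ι) : ℝ := Real.exp (x i) / ∑ j, Real.exp (x j)

/-- The jet of the `θ`-independent function `log ∑ exp`. -/
def logSumExp (ι : Type*) [Fintype ι] : Jet ι where
  val p := Real.log (∑ i, Real.exp (p.2 i))
  dt _ := 0
  grad p := softmax p.2
  hess u p := softmax p.2 ⬝ᵥ u ^ 2 - (softmax p.2 ⬝ᵥ u) ^ 2

lemma curv_logSumExp (m : ℝ) (u : ι → ℝ) (p : ℝ × (ι → ℝ)) :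
    (logSumExp ι).curv m u p =
      softmax p.2 ⬝ᵥ u ^ 2 - (1 - m) * (softmax p.2 ⬝ᵥ u) ^ 2 := by
  rw [Jet.curv, Jet.slope, logSumExp]
  ring

lemma softmax_dotProduct (x w : ι → ℝ) :
    softmax x ⬝ᵥ w = (∑ i, Real.exp (x i) * w i) / ∑ i, Real.exp (x i) := by
  simp only [dotProduct, softmax, Finset.sum_div, div_mul_eq_mul_div]

lemma hasDerivAt_sum_exp_mul (x u w : ι → ℝ) :
    HasDerivAt (fun s : ℝ => ∑ i, Real.exp ((x + s • u) i) * w i)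
      (∑ i, Real.exp (x i) * (u i * w i)) 0 := by
  refine HasDerivAt.fun_sum fun i _ => ?_
  have hline : HasDerivAt (fun s : ℝ => (x + s • u) i) (u i) 0 := by
    simpa using ((hasDerivAt_id (0 : ℝ)).mul_const (u i)).const_add (x i)
  refine (hline.exp.mul_const (w i)).congr_deriv ?_
  rw [zero_smul, add_zero, mul_assoc]

variable [Nonempty ι]

lemma sum_exp_pos (x : ι → ℝ) : 0 < ∑ i, Real.exp (x i) :=
  Finset.sum_pos (fun _ _ => Real.exp_pos _) Finset.univ_nonempty

lemma softmax_mem_stdSimplex (x : ι → ℝ) : softmax x ∈ stdSimplex ℝ ι :=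
  ⟨fun i => div_nonneg (Real.exp_pos _).le (sum_exp_pos x).le, by
    simp only [softmax, ← Finset.sum_div, div_self (sum_exp_pos x).ne']⟩

lemma continuous_softmax : Continuous (softmax : (ι → ℝ) → ι → ℝ) :=
  continuous_pi fun i => Continuous.div (by fun_prop) (by fun_prop) fun x => (sum_exp_pos x).ne'

lemma hasDerivAt_log_sum_exp (x u : ι → ℝ) :
    HasDerivAt (fun s : ℝ => Real.log (∑ i, Real.exp ((x + s • u) i))) (softmax x ⬝ᵥ u) 0 := by
  have hsum : HasDerivAt (fun s : ℝ => ∑ i, Real.exp ((x + s • u) i))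
      (∑ i, Real.exp (x i) * u i) 0 := by
    simpa using hasDerivAt_sum_exp_mul x u 1
  refine (hsum.log (sum_exp_pos _).ne').congr_deriv ?_
  rw [softmax_dotProduct, zero_smul, add_zero]

lemma hasDerivAt_softmax_dotProduct (x u : ι → ℝ) :
    HasDerivAt (fun s : ℝ => softmax (x + s • u) ⬝ᵥ u)
      (softmax x ⬝ᵥ u ^ 2 - (softmax x ⬝ᵥ u) ^ 2) 0 := by
  have hsum : HasDerivAt (fun s : ℝ => ∑ i, Real.exp ((x + s • u) i))
      (∑ i, Real.exp (x i) * u i) 0 := by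
    simpa using hasDerivAt_sum_exp_mul x u 1
  simp only [softmax_dotProduct]
  refine ((hasDerivAt_sum_exp_mul x u u).div hsum (sum_exp_pos _).ne').congr_deriv ?_
  have := (sum_exp_pos x).ne'
  simp only [zero_smul, add_zero, Pi.pow_apply, sq]
  field_simp

lemma isRegular_logSumExp : (logSumExp ι).IsRegular where
  hasLineDerivAt_dt p := by
    simpa [HasLineDerivAt, logSumExp] using hasDerivAt_const (0 : ℝ) _
  hasLineDerivAt_slope u p := hasDerivAt_log_sum_exp p.2 u
  hasLineDerivAt_hess u p := hasDerivAt_softmax_dotProduct p.2 u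
  continuous_dt := continuous_const
  continuous_grad := continuous_softmax.comp continuous_snd
  continuous_hess u :=
    ((continuous_softmax.comp continuous_snd).dotProduct continuous_const).sub
      (((continuous_softmax.comp continuous_snd).dotProduct continuous_const).pow 2)
  exists_abs_dt_le := ⟨0, fun p => by simp [logSumExp]⟩
  exists_abs_hess_le u := by
    have hbound (x w : ι → ℝ) : |softmax x ⬝ᵥ w| ≤ ‖w‖ :=
      abs_dotProduct_le_of_mem_stdSimplex (softmax_mem_stdSimplex x) (norm_le_pi_norm w)
    refine ⟨‖u ^ 2‖ + ‖u‖ ^ 2, fun p => (abs_sub _ _).trans ?_⟩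
    rw [abs_pow]
    gcongr
    exacts [hbound _ _, hbound _ _]
  grad_mem p := softmax_mem_stdSimplex p.2

end LogSumExp

/-! ### Overlaps -/

section Overlap

variable {ι κ : Type*} [Fintype ι] [Fintype κ]

lemma sum_dotProduct_sq (w : ι → ℝ) (B : κ → ι → ℝ) :
    ∑ k, (w ⬝ᵥ B k) ^ 2 = ∑ s, ∑ t, w s * w t * ∑ k, B k s * B k t := by
  simp only [dotProduct, sq, Finset.sum_mul_sum]
  rw [Finset.sum_comm]
  refine Finset.sum_congr rfl fun s _ => ?_
  rw [Finset.sum_comm]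
  simp only [Finset.mul_sum, mul_mul_mul_comm]

-- Expands the mean of `(R - Q) ^ 2 ≥ 0`, where `R = ∑ i, A i s * A i t` is the overlap of two
-- independent samples `s`, `t` from `w`.
lemma two_mul_sum_dotProduct_sq_le {w : ι → ℝ} (hw : w ∈ stdSimplex ℝ ι) (A : κ → ι → ℝ) (Q : ℝ) :
    2 * Q * ∑ i, (w ⬝ᵥ A i) ^ 2 ≤ ∑ i, ∑ j, (w ⬝ᵥ (A i * A j)) ^ 2 + Q ^ 2 := by
  have hpair : ∑ i, ∑ j, (w ⬝ᵥ (A i * A j)) ^ 2 =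
      ∑ s, ∑ t, w s * w t * (∑ i, A i s * A i t) ^ 2 := by
    rw [← Fintype.sum_prod_type' (f := fun i j => (w ⬝ᵥ (A i * A j)) ^ 2),
      sum_dotProduct_sq w fun k : κ × κ => A k.1 * A k.2]
    refine Finset.sum_congr rfl fun s _ => Finset.sum_congr rfl fun t _ => ?_
    rw [sq, Finset.sum_mul_sum, Fintype.sum_prod_type]
    simp only [Pi.mul_apply, mul_mul_mul_comm]
  have hvar : 0 ≤ ∑ s, ∑ t, w s * w t * (∑ i, A i s * A i t - Q) ^ 2 :=
    Finset.sum_nonneg fun s _ => Finset.sum_nonneg fun t _ =>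
      mul_nonneg (mul_nonneg (hw.1 s) (hw.1 t)) (sq_nonneg _)
  have hexpand (s t : ι) : w s * w t * (∑ i, A i s * A i t - Q) ^ 2 =
      w s * w t * (∑ i, A i s * A i t) ^ 2 - 2 * Q * (w s * w t * ∑ i, A i s * A i t) +
        Q ^ 2 * (w s * w t) := by ring
  simp only [hexpand, Finset.sum_add_distrib, Finset.sum_sub_distrib, ← Finset.mul_sum] at hvar
  rw [← hpair, ← sum_dotProduct_sq, ← Finset.sum_mul, hw.2] at hvar
  linarith

lemma two_mul_sum_lt_add_sum_diag [LinearOrder κ] {X : κ → κ → ℝ} (hX : ∀ i j, X i j = X j i) :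
    2 * ∑ i, ∑ j, (if i < j then X i j else 0) + ∑ i, X i i = ∑ i, ∑ j, X i j := by
  have hswap : ∑ i, ∑ j, (if i < j then X i j else 0) =
      ∑ i, ∑ j, (if j < i then X i j else 0) := by
    rw [Finset.sum_comm]
    simp only [hX]
  have hdiag : ∑ i, X i i = ∑ i, ∑ j, (if i = j then X i j else 0) := by
    simp only [Finset.sum_ite_eq, Finset.mem_univ, if_true]
  rw [two_mul]
  nth_rewrite 2 [hswap]
  simp only [hdiag, ← Finset.sum_add_distrib]
  refine Finset.sum_congr rfl fun i _ => Finset.sum_congr rfl fun j _ => ?_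
  rcases lt_trichotomy i j with h | rfl | h
  · simp [h, h.not_gt, h.ne]
  · simp
  · simp [h, h.not_gt, h.ne']

end Overlap

/-! ### The interpolation -/

section Interpolation

variable {N : ℕ}

/-- The energies, over all configurations, of the scaled coupling `β J i j / √N`. -/
def couplingVec (β : ℝ) (i j : Fin N) : (Fin N → Bool) → ℝ :=
  if i < j then (β / √N) • fun σ => spin (σ i) * spin (σ j) else 0

/-- The energies, over all configurations, of a field of strength `c` at the site `i`. -/
def fieldVec (c : ℝ) (i : Fin N) : (Fin N → Bool) → ℝ := c • fun σ => spin (σ i)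

/-- The couplings, switched on by the amplitude `sin θ`. -/
def couplingDirs (N : ℕ) (β : ℝ) : List (GaussDir ((Fin N → Bool) → ℝ)) :=
  (List.finRange N).flatMap fun i => (List.finRange N).map fun j => ⟨0, couplingVec β i j⟩

/-- Gaussian fields of strength `c` at all sites, switched off by the amplitude
`sin (θ + π / 2) = cos θ`. -/
def fieldDirs (N : ℕ) (c : ℝ) : List (GaussDir ((Fin N → Bool) → ℝ)) :=
  (List.finRange N).map fun i => ⟨Real.pi / 2, fieldVec c i⟩

/-- The strength of the Gaussian field attached to the interval `[q_{a-1}, q_a)`. -/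
def strength (β : ℝ) (q : ℕ → ℝ) (a : ℕ) : ℝ := β * √(q a - q (a - 1))

/-- The Gaussian variables still to be averaged once the levels above `a` are done. -/
def outerDirs (N : ℕ) (β : ℝ) (q : ℕ → ℝ) : ℕ → List (GaussDir ((Fin N → Bool) → ℝ))
  | 0 => couplingDirs N β
  | a + 1 => fieldDirs N (strength β q (a + 1)) ++ outerDirs N β q a

lemma spin_mul_self (b : Bool) : spin b * spin b = 1 := by cases b <;> norm_num [spin]

lemma couplingVec_sq (β : ℝ) (i j : Fin N) :
    couplingVec β i j ^ 2 = Function.const _ (if i < j then β ^ 2 / N else 0) := by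
  funext σ
  by_cases hij : i < j
  · simp only [couplingVec, if_pos hij, Pi.pow_apply, Pi.smul_apply, smul_eq_mul, mul_pow, div_pow,
      Real.sq_sqrt (Nat.cast_nonneg N), sq (spin _), spin_mul_self, mul_one, Function.const_apply]
  · simp [couplingVec, hij]

lemma fieldVec_sq (c : ℝ) (i : Fin N) : fieldVec c i ^ 2 = Function.const _ (c ^ 2) := by
  funext σ
  simp only [fieldVec, Pi.pow_apply, Pi.smul_apply, smul_eq_mul, mul_pow, sq (spin _),
    spin_mul_self, mul_one, Function.const_apply]

lemma sum_couplingDirs (β θ : ℝ) (g : ((Fin N → Bool) → ℝ) → ℝ) :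
    ((couplingDirs N β).map fun ℓ => ℓ.rate θ * g ℓ.vec).sum =
      Real.sin θ * Real.cos θ * ∑ i, ∑ j, g (couplingVec β i j) := by
  rw [couplingDirs, List.map_flatMap, List.flatMap_def, List.sum_flatten, List.map_map]
  simp only [List.map_map, Function.comp_def, GaussDir.rate, add_zero, ← Fin.sum_univ_def,
    Finset.mul_sum]

lemma sum_fieldDirs (c θ : ℝ) (g : ((Fin N → Bool) → ℝ) → ℝ) :
    ((fieldDirs N c).map fun ℓ => ℓ.rate θ * g ℓ.vec).sum =
      -(Real.sin θ * Real.cos θ * ∑ i, g (fieldVec c i)) := by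
  simp only [fieldDirs, List.map_map, Function.comp_def, GaussDir.rate, Real.sin_add_pi_div_two,
    Real.cos_add_pi_div_two, ← Fin.sum_univ_def, Finset.mul_sum, ← Finset.sum_neg_distrib]
  exact Finset.sum_congr rfl fun i _ => by ring

lemma sum_outerDirs (β θ : ℝ) (q : ℕ → ℝ) (a : ℕ) (g : ((Fin N → Bool) → ℝ) → ℝ) :
    ((outerDirs N β q a).map fun ℓ => ℓ.rate θ * g ℓ.vec).sum =
      Real.sin θ * Real.cos θ * (∑ i, ∑ j, g (couplingVec β i j) -
        ∑ b ∈ Finset.range a, ∑ i, g (fieldVec (strength β q (b + 1)) i)) := by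
  induction a with
  | zero => simp [outerDirs, sum_couplingDirs]
  | succ a ih =>
    rw [outerDirs, List.map_append, List.sum_append, ih, sum_fieldDirs, Finset.sum_range_succ]
    ring

lemma overlap_le_sum_couplingVec (hN : 0 < N) {w : (Fin N → Bool) → ℝ}
    (hw : w ∈ stdSimplex ℝ (Fin N → Bool)) (β Q : ℝ) :
    β ^ 2 * Q * ∑ i : Fin N, (w ⬝ᵥ fun σ => spin (σ i)) ^ 2 ≤
      ∑ i, ∑ j, (w ⬝ᵥ couplingVec β i j) ^ 2 + β ^ 2 / 2 * (N * Q ^ 2 + 1) := by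
  have hN' : (0 : ℝ) < N := by exact_mod_cast hN
  let A (i : Fin N) : (Fin N → Bool) → ℝ := fun σ => spin (σ i)
  have hcoupling (i j : Fin N) : (w ⬝ᵥ couplingVec β i j) ^ 2 =
      β ^ 2 / N * if i < j then (w ⬝ᵥ (A i * A j)) ^ 2 else 0 := by
    by_cases hij : i < j
    · simp only [couplingVec, if_pos hij, dotProduct_smul, smul_eq_mul, mul_pow, div_pow,
        Real.sq_sqrt hN'.le]
      rfl
    · simp [couplingVec, hij]
  have hdiag (i : Fin N) : w ⬝ᵥ (A i * A i) = 1 := by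
    simp only [dotProduct, Pi.mul_apply, A, spin_mul_self, mul_one, hw.2]
  have hsymm := two_mul_sum_lt_add_sum_diag (X := fun i j => (w ⬝ᵥ (A i * A j)) ^ 2)
    fun i j => by rw [mul_comm]
  simp only [hdiag, one_pow, Finset.sum_const, Finset.card_univ, Fintype.card_fin,
    nsmul_eq_mul, mul_one] at hsymm
  have hoverlap := two_mul_sum_dotProduct_sq_le hw A (N * Q)
  rw [← hsymm] at hoverlap
  simp only [hcoupling, ← Finset.mul_sum]
  have := mul_le_mul_of_nonneg_left hoverlap (by positivity : 0 ≤ β ^ 2 / (2 * N))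
  field_simp at this ⊢
  linarith

lemma sum_strength_sq {β : ℝ} {q : ℕ → ℝ} {a : ℕ} (hq0 : q 0 = 0)
    (hq : ∀ b < a, q b ≤ q (b + 1)) :
    ∑ b ∈ Finset.range a, strength β q (b + 1) ^ 2 = β ^ 2 * q a := by
  have hterm : ∀ b ∈ Finset.range a,
      strength β q (b + 1) ^ 2 = β ^ 2 * q (b + 1) - β ^ 2 * q b := fun b hb => by
    rw [strength, mul_pow, Nat.add_sub_cancel,
      Real.sq_sqrt (sub_nonneg.2 (hq b (Finset.mem_range.1 hb))), mul_sub]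
  rw [Finset.sum_congr rfl hterm, Finset.sum_range_sub fun b => β ^ 2 * q b, hq0, mul_zero,
    sub_zero]

lemma neg_sum_rate_slope_sq_le (hN : 0 < N) {J : Jet (Fin N → Bool)} (h : J.IsRegular)
    {β θ : ℝ} {q : ℕ → ℝ} {a : ℕ} (hq0 : q 0 = 0) (hq : ∀ b < a, q b ≤ q (b + 1))
    (hθ : 0 ≤ Real.sin θ * Real.cos θ) (x : (Fin N → Bool) → ℝ) :
    -((outerDirs N β q a).map fun ℓ => ℓ.rate θ * J.slope ℓ.vec (θ, x) ^ 2).sum ≤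
      Real.sin θ * Real.cos θ * (β ^ 2 / 2 * (N * q a ^ 2 + 1)) := by
  rw [sum_outerDirs β θ q a fun u => J.slope u (θ, x) ^ 2, ← mul_neg, neg_sub]
  refine mul_le_mul_of_nonneg_left (sub_le_iff_le_add'.2 ?_) hθ
  simp only [Jet.slope, fieldVec, dotProduct_smul, smul_eq_mul, mul_pow, ← Finset.mul_sum,
    ← Finset.sum_mul]
  rw [sum_strength_sq hq0 hq]
  exact overlap_le_sum_couplingVec hN (h.grad_mem _) β (q a)

lemma sum_couplingVec_sq (hN : 0 < N) (β : ℝ) :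
    ∑ i : Fin N, ∑ j : Fin N, (if i < j then β ^ 2 / N else 0) = β ^ 2 / 2 * (N - 1) := by
  have hN' : (N : ℝ) ≠ 0 := by exact_mod_cast hN.ne'
  have hsymm := two_mul_sum_lt_add_sum_diag (X := fun _ _ : Fin N => β ^ 2 / N) fun _ _ => rfl
  simp only [Finset.sum_const, Finset.card_univ, Fintype.card_fin, nsmul_eq_mul,
    mul_div_cancel₀ _ hN'] at hsymm
  linarith

lemma sum_rate_softmax_sq (hN : 0 < N) {β θ : ℝ} {q : ℕ → ℝ} {a : ℕ} (hq0 : q 0 = 0)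
    (hq : ∀ b < a, q b ≤ q (b + 1)) (x : (Fin N → Bool) → ℝ) :
    ((outerDirs N β q a).map fun ℓ => ℓ.rate θ * softmax x ⬝ᵥ ℓ.vec ^ 2).sum =
      Real.sin θ * Real.cos θ * (β ^ 2 / 2 * (N - 1) - β ^ 2 * (N * q a)) := by
  have hconst (c : ℝ) : softmax x ⬝ᵥ Function.const _ c = c := by
    simp only [dotProduct, Function.const_apply, ← Finset.sum_mul, (softmax_mem_stdSimplex x).2,
      one_mul]
  rw [sum_outerDirs β θ q a fun u => softmax x ⬝ᵥ u ^ 2]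
  simp only [couplingVec_sq, fieldVec_sq, hconst, sum_couplingVec_sq hN, Finset.sum_const,
    Finset.card_univ, Fintype.card_fin, nsmul_eq_mul, ← Finset.mul_sum, sum_strength_sq hq0 hq]
  ring

lemma drift_logSumExp (m : ℝ) (P : List (GaussDir ((Fin N → Bool) → ℝ)))
    (p : ℝ × ((Fin N → Bool) → ℝ)) :
    (logSumExp (Fin N → Bool)).drift m P p =
      (P.map fun ℓ => ℓ.rate p.1 * softmax p.2 ⬝ᵥ ℓ.vec ^ 2).sum -
        (1 - m) * (P.map fun ℓ => ℓ.rate p.1 * (logSumExp _).slope ℓ.vec p ^ 2).sum := by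
  rw [Jet.drift_eq_drift_sub 1 m]
  simp only [Jet.drift, curv_logSumExp, sub_self, zero_mul, sub_zero]
  rw [show (logSumExp (Fin N → Bool)).dt p = 0 from rfl, zero_add]

end Interpolation

namespace OrderParam

variable (X : OrderParam) {N : ℕ}

lemma m_le_m_succ {a : ℕ} (ha : a < X.K) : X.m a ≤ X.m (a + 1) := by
  rcases Nat.eq_zero_or_pos a with rfl | hpos
  · exact X.hm0 ▸ X.hm1
  · exact X.hm_mono a hpos ha

/-- `∑ m_b (q_b² - q_{b-1}²)` over the levels `b > a`, that is `2 ∫ r x(r) dr` over `[q_a, 1]`. -/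
def sqIncrements (a : ℕ) : ℝ :=
  ∑ b ∈ Finset.Ico a X.K, X.m (b + 1) * (X.q (b + 1) ^ 2 - X.q b ^ 2)

lemma sqIncrements_K : X.sqIncrements X.K = 0 := by simp [sqIncrements]

lemma sqIncrements_eq_add {a : ℕ} (ha : a < X.K) :
    X.sqIncrements a = X.m (a + 1) * (X.q (a + 1) ^ 2 - X.q a ^ 2) + X.sqIncrements (a + 1) :=
  Finset.sum_eq_sum_Ico_succ_bot ha _

/-- The log-sum-exp function averaged over the Gaussian fields of the `j` highest levels. -/
def levelJet (N : ℕ) (β : ℝ) : ℕ → Jet (Fin N → Bool)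
  | 0 => logSumExp _
  | j + 1 => (levelJet N β j).averageList (X.m (X.K - j)) (fieldDirs N (strength β X.q (X.K - j)))

lemma isRegular_levelJet (N : ℕ) (β : ℝ) (j : ℕ) : (X.levelJet N β j).IsRegular := by
  induction j with
  | zero => exact isRegular_logSumExp
  | succ j ih => exact ih.averageList _ _

lemma drift_logSumExp_le (hN : 0 < N) (β : ℝ) {θ : ℝ} (hθ : 0 ≤ Real.sin θ * Real.cos θ)
    (x : (Fin N → Bool) → ℝ) :
    (logSumExp (Fin N → Bool)).drift (X.m X.K) (outerDirs N β X.q X.K) (θ, x) ≤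
      -(Real.sin θ * Real.cos θ * (β ^ 2 / 2 * (X.m X.K * (N + 1)))) := by
  rw [drift_logSumExp, sum_rate_softmax_sq hN X.hq0 X.hq_mono, X.hqK]
  have := mul_le_mul_of_nonneg_left (neg_sum_rate_slope_sq_le hN isRegular_logSumExp (β := β)
    X.hq0 X.hq_mono hθ x) (sub_nonneg.2 X.hmK)
  rw [X.hqK] at this
  linarith

lemma drift_levelJet_le (hN : 0 < N) (β : ℝ) {θ : ℝ} (hθ : 0 ≤ Real.sin θ * Real.cos θ)
    {a j : ℕ} (haj : a + j = X.K) (x : (Fin N → Bool) → ℝ) :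
    (X.levelJet N β j).drift (X.m a) (outerDirs N β X.q a) (θ, x) ≤
      -(Real.sin θ * Real.cos θ *
        (β ^ 2 / 2 * (X.m a * (N * X.q a ^ 2 + 1) + N * X.sqIncrements a))) := by
  induction j generalizing a x with
  | zero =>
    obtain rfl : a = X.K := haj
    simpa [levelJet, X.hqK, sqIncrements_K] using X.drift_logSumExp_le hN β hθ x
  | succ j ih =>
    have hregular := X.isRegular_levelJet N β (j + 1)
    have hlevel : X.levelJet N β (j + 1) = (X.levelJet N β j).averageList (X.m (a + 1))
        (fieldDirs N (strength β X.q (a + 1))) := by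
      rw [levelJet, show X.K - j = a + 1 by omega]
    have haverage := Jet.drift_averageList_le (X.isRegular_levelJet N β j)
      (fun x => ih (a := a + 1) (by omega) x) x
    rw [← hlevel] at haverage
    have hslope := mul_le_mul_of_nonneg_left (neg_sum_rate_slope_sq_le hN hregular (β := β) X.hq0
      (a := a) (fun b hb => X.hq_mono b (by omega)) hθ x)
      (sub_nonneg.2 (X.m_le_m_succ (a := a) (by omega)))
    rw [Jet.drift_eq_drift_sub (X.m (a + 1)), X.sqIncrements_eq_add (by omega)]
    linarith

/-- The interpolating function: at `θ = π / 2` the fields are off and it is `E log Z_N`,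
at `θ = 0` the couplings are off and it is a sum of Parisi functions. -/
def interpolation (N : ℕ) (β : ℝ) : Jet (Fin N → Bool) :=
  (X.levelJet N β X.K).averageList 0 (couplingDirs N β)

lemma isRegular_interpolation (N : ℕ) (β : ℝ) : (X.interpolation N β).IsRegular :=
  (X.isRegular_levelJet N β X.K).averageList _ _

lemma dt_interpolation_le (hN : 0 < N) (β : ℝ) {θ : ℝ} (hθ : 0 ≤ Real.sin θ * Real.cos θ)
    (x : (Fin N → Bool) → ℝ) :
    (X.interpolation N β).dt (θ, x) ≤
      -(Real.sin θ * Real.cos θ * (β ^ 2 / 2 * (N * X.sqIncrements 0))) := by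
  rw [← Jet.drift_nil 0]
  refine Jet.drift_averageList_le (X.isRegular_levelJet N β X.K) (fun x => ?_) x
  have := X.drift_levelJet_le hN β hθ (zero_add _) x
  rwa [X.hm0, zero_mul, zero_add, outerDirs, ← List.append_nil (couplingDirs N β)] at this

lemma interpolation_pi_div_two_le (hN : 0 < N) (β : ℝ) (x : (Fin N → Bool) → ℝ) :
    (X.interpolation N β).val (Real.pi / 2, x) ≤
      (X.interpolation N β).val (0, x) - β ^ 2 * N / 4 * X.sqIncrements 0 := by
  let c := β ^ 2 / 2 * (N * X.sqIncrements 0)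
  have hderiv (θ : ℝ) :
      HasDerivAt (fun t => (X.interpolation N β).val (t, x) + c * (Real.sin t ^ 2 / 2))
        ((X.interpolation N β).dt (θ, x) + c * (Real.sin θ * Real.cos θ)) θ := by
    have hval := hasDerivAt_comp_line (X.isRegular_interpolation N β).hasLineDerivAt_dt (0, x) θ
    simp only [Prod.smul_mk, Prod.mk_add_mk, smul_eq_mul, mul_one, smul_zero, zero_add,
      add_zero] at hval
    refine hval.add (HasDerivAt.const_mul c ?_)
    exact (((Real.hasDerivAt_sin θ).pow 2).div_const 2).congr_deriv (by norm_num; ring)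
  have hanti : AntitoneOn (fun t => (X.interpolation N β).val (t, x) + c * (Real.sin t ^ 2 / 2))
      (Set.Icc 0 (Real.pi / 2)) := by
    refine antitoneOn_of_deriv_nonpos (convex_Icc _ _)
      (fun t _ => (hderiv t).continuousAt.continuousWithinAt)
      (fun t _ => (hderiv t).differentiableAt.differentiableWithinAt) fun t ht => ?_
    rw [interior_Icc] at ht
    have hsin := Real.sin_nonneg_of_nonneg_of_le_pi ht.1.le (by linarith [ht.2, Real.pi_pos])
    have hcos := Real.cos_nonneg_of_neg_pi_div_two_le_of_le (by linarith [ht.1, Real.pi_pos])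
      ht.2.le
    rw [(hderiv t).deriv]
    have hdt : (X.interpolation N β).dt (t, x) ≤ -(Real.sin t * Real.cos t * c) :=
      X.dt_interpolation_le hN β (mul_nonneg hsin hcos) x
    linarith
  have := hanti (Set.left_mem_Icc.2 (by positivity)) (Set.right_mem_Icc.2 (by positivity))
    (by positivity)
  simp only [Real.sin_pi_div_two, Real.sin_zero, c] at this
  linarith

end OrderParam

/-! ### Iterated integrals -/

section IteratedIntegral

variable {Ω E : Type*} [MeasurableSpace Ω] {ν : Measure Ω} [IsProbabilityMeasure ν]
  [NormedAddCommGroup E] {C : ℝ≥0} {Φ : E → ℝ} {W : Ω → E}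

lemma integrable_comp_const_add (hΦ : LipschitzWith C Φ) (hW : Integrable W ν) (x : E) :
    Integrable (fun ω => Φ (x + W ω)) ν := by
  refine ((integrable_const ‖Φ x‖).add (hW.norm.const_mul (C : ℝ))).mono'
    (hΦ.continuous.comp_aestronglyMeasurable (hW.aestronglyMeasurable.const_add x))
    (ae_of_all _ fun ω => (norm_le_norm_add_norm_sub' _ (Φ x)).trans ?_)
  have := hΦ.dist_le_mul (x + W ω) x
  rw [dist_eq_norm, dist_eq_norm, add_sub_cancel_left] at this
  exact add_le_add_right this _

lemma lipschitzWith_integral_comp_const_add (hΦ : LipschitzWith C Φ) (hW : Integrable W ν) :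
    LipschitzWith C fun x => ∫ ω, Φ (x + W ω) ∂ν := by
  refine .of_dist_le_mul fun x y => ?_
  rw [dist_eq_norm, ← integral_sub (integrable_comp_const_add hΦ hW x)
    (integrable_comp_const_add hΦ hW y)]
  refine (norm_integral_le_of_norm_le_const (C := C * dist x y) (ae_of_all _ fun ω => ?_)).trans_eq
    (by simp)
  rw [← dist_eq_norm, ← dist_add_right x y (W ω)]
  exact hΦ.dist_le_mul _ _

lemma integrable_sum_pi {n : ℕ} {W : Fin n → Ω → E} (hW : ∀ k, Integrable (W k) ν) :
    Integrable (fun w : Fin n → Ω => ∑ k, W k (w k)) (Measure.pi fun _ => ν) :=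
  integrable_finsetSum _ fun k _ =>
    (measurePreserving_eval (fun _ : Fin n => ν) k).integrable_comp_of_integrable (hW k)

lemma integral_integral_comp_const_add {n : ℕ} {W : Fin (n + 1) → Ω → E}
    (hΦ : LipschitzWith C Φ) (hW : ∀ k, Integrable (W k) ν) (x : E) :
    ∫ w, ∫ ω, Φ (x + ∑ k : Fin n, W k.succ (w k) + W 0 ω) ∂ν ∂(Measure.pi fun _ => ν) =
      ∫ w, Φ (x + ∑ k, W k (w k)) ∂(Measure.pi fun _ => ν) := by
  have hmp := (measurePreserving_piFinSuccAbove (fun _ : Fin (n + 1) => ν) 0).symm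
  have hsplit (p : Ω × (Fin n → Ω)) :
      x + ∑ k, W k ((MeasurableEquiv.piFinSuccAbove (fun _ : Fin (n + 1) => Ω) 0).symm p k) =
        x + (W 0 p.1 + ∑ k : Fin n, W k.succ (p.2 k)) := by
    rw [Fin.sum_univ_succ]
    simp [MeasurableEquiv.piFinSuccAbove]
  have hint := integrable_comp_const_add hΦ
    (((hW 0).comp_fst (Measure.pi fun _ : Fin n => ν)).add
      ((integrable_sum_pi fun k : Fin n => hW k.succ).comp_snd ν)) x
  rw [← hmp.integral_comp' fun w => Φ (x + ∑ k, W k (w k))]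
  simp only [hsplit]
  refine Eq.trans ?_ (integral_prod_symm _ hint).symm
  simp only [add_comm (W 0 _), add_assoc, Pi.add_apply]

lemma foldl_eq_integral_pi {n : ℕ} {W : Fin n → Ω → E} (hW : ∀ k, Integrable (W k) ν)
    {T : Fin n → (E → ℝ) → E → ℝ}
    (hT : ∀ k Φ, LipschitzWith C Φ → T k Φ = fun x => ∫ ω, Φ (x + W k ω) ∂ν)
    (hΦ : LipschitzWith C Φ) :
    (List.finRange n).foldl (fun Φ k => T k Φ) Φ =
      fun x => ∫ w, Φ (x + ∑ k, W k (w k)) ∂(Measure.pi fun _ => ν) := by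
  induction n generalizing Φ with
  | zero => simp
  | succ n ih =>
    have hLip := lipschitzWith_integral_comp_const_add hΦ (hW 0)
    rw [List.finRange_succ, List.foldl_cons, List.foldl_map, hT 0 Φ hΦ,
      ih (fun k => hW k.succ) (fun k => hT k.succ) hLip]
    funext x
    exact integral_integral_comp_const_add hΦ hW x

variable [NormedSpace ℝ E]

lemma integrable_smul_stdGauss (v : E) : Integrable (fun z : ℝ => z • v) stdGauss :=
  ((memLp_id_gaussianReal' 1 (by simp)).integrable le_rfl).smul_const v

lemma foldl_eq_integral_gaussN {N : ℕ} (v : Fin N → E) (hΦ : LipschitzWith C Φ) :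
    (List.finRange N).foldl (fun Φ j x => ∫ z, Φ (x + z • v j) ∂stdGauss) Φ =
      fun x => ∫ g, Φ (x + ∑ j, g j • v j) ∂gaussN N :=
  foldl_eq_integral_pi (T := fun j Φ x => ∫ z, Φ (x + z • v j) ∂stdGauss)
    (fun j => integrable_smul_stdGauss (v j)) (fun _ _ _ => rfl) hΦ

lemma foldl_foldl_eq_integral_gaussC {N : ℕ} (v : Fin N → Fin N → E) (hΦ : LipschitzWith C Φ) :
    (List.finRange N).foldl (fun Φ i => (List.finRange N).foldl
        (fun Φ j x => ∫ z, Φ (x + z • v i j) ∂stdGauss) Φ) Φ =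
      fun x => ∫ Jc, Φ (x + ∑ i, ∑ j, Jc i j • v i j) ∂gaussC N :=
  foldl_eq_integral_pi
    (T := fun i Φ => (List.finRange N).foldl (fun Φ j x => ∫ z, Φ (x + z • v i j) ∂stdGauss) Φ)
    (fun i => integrable_sum_pi fun j => integrable_smul_stdGauss (v i j))
    (fun i _ => foldl_eq_integral_gaussN (v i)) hΦ

end IteratedIntegral

/-! ### The endpoints of the interpolation -/

namespace Jet

variable {ι : Type*} [Fintype ι]

lemma averageList_val (J : Jet ι) (m θ : ℝ) (L : List (GaussDir (ι → ℝ))) :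
    (fun x => (J.averageList m L).val (θ, x)) =
      L.foldl (fun Φ ℓ x => gaussLogMean m fun z => Φ (x + z • Real.sin (θ + ℓ.phase) • ℓ.vec))
        fun x => J.val (θ, x) := by
  induction L generalizing J with
  | nil => rfl
  | cons ℓ L ih =>
    refine (ih (J.average m ℓ)).trans ?_
    simp [average, GaussDir.disp]

lemma averageList_val_of_sin_eq_zero (J : Jet ι) (m : ℝ) {θ : ℝ} {L : List (GaussDir (ι → ℝ))}
    (hL : ∀ ℓ ∈ L, Real.sin (θ + ℓ.phase) = 0) (x : ι → ℝ) :
    (J.averageList m L).val (θ, x) = J.val (θ, x) := by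
  induction L generalizing J with
  | nil => rfl
  | cons ℓ L ih =>
    refine (ih (J.average m ℓ) fun ℓ' hℓ' => hL ℓ' (List.mem_cons_of_mem _ hℓ')).trans ?_
    simp [average, GaussDir.disp, hL ℓ List.mem_cons_self, gaussLogMean_const]

end Jet

/-- The energies, over all configurations, of the field `Y` at inverse temperature `β`. -/
def siteField {N : ℕ} (β : ℝ) (Y : Fin N → ℝ) (σ : Fin N → Bool) : ℝ :=
  ∑ i, β * Y i * spin (σ i)

section Sites

variable {N : ℕ} {β : ℝ}

lemma log_ZSK (β h : ℝ) (Jc : Fin N → Fin N → ℝ) (θ : ℝ) :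
    Real.log (ZSK N β h Jc) = (logSumExp (Fin N → Bool)).val
      (θ, siteField β (fun _ => h) + ∑ i, ∑ j, Jc i j • couplingVec β i j) := by
  have hcoupling (σ : Fin N → Bool) (i j : Fin N) : Jc i j * couplingVec β i j σ =
      β / √N * if i < j then Jc i j * spin (σ i) * spin (σ j) else 0 := by
    unfold couplingVec
    split_ifs
    · simp only [Pi.smul_apply, smul_eq_mul]
      ring
    · simp
  unfold ZSK logSumExp
  congr! with σ
  simp only [hamSK, siteField, Pi.add_apply, Finset.sum_apply, Pi.smul_apply, smul_eq_mul,
    hcoupling, ← Finset.mul_sum]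
  ring

lemma siteField_add_smul_fieldVec (c z : ℝ) (Y : Fin N → ℝ) (i : Fin N) :
    siteField β Y + z • fieldVec (β * c) i = siteField β (Y + Pi.single i (z * c)) := by
  funext σ
  have hsingle : ∑ j, β * (Pi.single i (z * c) : Fin N → ℝ) j * spin (σ j) =
      z * (β * c * spin (σ i)) := by
    rw [Fintype.sum_eq_single i fun j hj => by simp [hj], Pi.single_eq_same]
    ring
  simp only [siteField, fieldVec, Pi.add_apply, Pi.smul_apply, smul_eq_mul, mul_add, add_mul,
    Finset.sum_add_distrib, hsingle]

lemma logSumExp_siteField (θ : ℝ) (Y : Fin N → ℝ) :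
    (logSumExp (Fin N → Bool)).val (θ, siteField β Y) =
      N * Real.log 2 + ∑ i, Real.log (Real.cosh (β * Y i)) := by
  have hprod : ∑ σ : Fin N → Bool, Real.exp (siteField β Y σ) =
      ∏ i, (2 * Real.cosh (β * Y i)) := by
    simp only [siteField, Real.exp_sum]
    rw [← Fintype.prod_sum fun i b => Real.exp (β * Y i * spin b)]
    refine Finset.prod_congr rfl fun i _ => ?_
    rw [Fintype.sum_bool, Real.cosh_eq]
    simp only [spin, if_true, Bool.false_eq_true, if_false]
    ring_nf
  have hcosh (y : ℝ) : Real.log (2 * Real.cosh y) = Real.log 2 + Real.log (Real.cosh y) :=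
    Real.log_mul two_ne_zero (Real.cosh_pos _).ne'
  simp only [logSumExp, hprod]
  rw [Real.log_prod fun i _ => (mul_pos two_pos (Real.cosh_pos _)).ne']
  simp only [hcosh, Finset.sum_add_distrib, Finset.sum_const, Finset.card_univ, Fintype.card_fin,
    nsmul_eq_mul]

end Sites

namespace Jet.IsRegular

variable {N : ℕ} {β : ℝ} {J : Jet (Fin N → Bool)}

lemma average_val_siteField (h : J.IsRegular) {C : ℝ} {f : Fin N → ℝ → ℝ}
    (hf : ∀ Y, J.val (0, siteField β Y) = C + ∑ k, f k (Y k)) (m s : ℝ) (i : Fin N)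
    (Y : Fin N → ℝ) :
    (J.average m ⟨Real.pi / 2, fieldVec (β * √s) i⟩).val (0, siteField β Y) =
      C + ∑ k, Function.update f i (pStep m s (f i)) k (Y k) := by
  let ℓ : GaussDir ((Fin N → Bool) → ℝ) := ⟨Real.pi / 2, fieldVec (β * √s) i⟩
  let p : ℝ × ((Fin N → Bool) → ℝ) := (0, siteField β Y)
  let R := C + ∑ k ∈ {i}ᶜ, f k (Y k)
  have hline (z : ℝ) : -R + J.val (p + z • ℓ.disp p.1) = f i (Y i + z * √s) := by
    have hdisp : p + z • ℓ.disp p.1 = (0, siteField β (Y + Pi.single i (z * √s))) := by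
      simp [p, ℓ, GaussDir.disp, ← siteField_add_smul_fieldVec]
    have hoff : ∑ k ∈ {i}ᶜ, f k ((Y + Pi.single i (z * √s) : Fin N → ℝ) k) =
        ∑ k ∈ {i}ᶜ, f k (Y k) :=
      Finset.sum_congr rfl fun k hk => by simp [show k ≠ i by simpa using hk]
    rw [hdisp, hf, Fintype.sum_eq_add_sum_compl i, hoff, Pi.add_apply, Pi.single_eq_same]
    ring
  have hstep : pStep m s (f i) (Y i) = -R + (J.average m ℓ).val p := by
    have := gaussLogMean_const_add (m := m)
      (ℓ.hasExpGrowth_shift_right h.hasExpGrowth_val p).integrable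
      (ℓ.hasExpGrowth_shift_right (h.hasExpGrowth_exp_val m) p).integrable (-R)
    simp only [hline] at this
    exact this
  have hupdate : ∑ k ∈ {i}ᶜ, Function.update f i (pStep m s (f i)) k (Y k) =
      ∑ k ∈ {i}ᶜ, f k (Y k) :=
    Finset.sum_congr rfl fun k hk => by
      rw [Function.update_of_ne (by simpa using hk)]
  rw [Fintype.sum_eq_add_sum_compl i, hupdate, Function.update_self, hstep]
  ring

lemma averageList_val_siteField (h : J.IsRegular) {C : ℝ} {f : Fin N → ℝ → ℝ}
    (hf : ∀ Y, J.val (0, siteField β Y) = C + ∑ k, f k (Y k)) (m s : ℝ) {L : List (Fin N)}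
    (hL : L.Nodup) (Y : Fin N → ℝ) :
    (J.averageList m (L.map fun i => ⟨Real.pi / 2, fieldVec (β * √s) i⟩)).val
        (0, siteField β Y) =
      C + ∑ k, if k ∈ L then pStep m s (f k) (Y k) else f k (Y k) := by
  induction L generalizing J f with
  | nil => simpa [Jet.averageList] using hf Y
  | cons i L ih =>
    obtain ⟨hiL, hL⟩ := List.nodup_cons.1 hL
    refine (ih (h.average m _) (h.average_val_siteField hf m s i) hL).trans ?_
    congr 1
    refine Finset.sum_congr rfl fun k _ => ?_
    rcases eq_or_ne k i with rfl | hki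
    · simp [hiL]
    · simp [hki]

end Jet.IsRegular

namespace OrderParam

variable (X : OrderParam) (N : ℕ) (β : ℝ)

lemma levelJet_val_zero (j : ℕ) (Y : Fin N → ℝ) :
    (X.levelJet N β j).val (0, siteField β Y) =
      N * Real.log 2 + ∑ i, parisiLevel X.K X.q X.m β j (Y i) := by
  induction j generalizing Y with
  | zero => exact logSumExp_siteField 0 Y
  | succ j ih =>
    refine ((X.isRegular_levelJet N β j).averageList_val_siteField ih _ _
      (List.nodup_finRange N) Y).trans ?_
    simp only [List.mem_finRange, if_true]
    rfl

lemma interpolation_val_zero (h : ℝ) :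
    (X.interpolation N β).val (0, siteField β fun _ => h) =
      N * (Real.log 2 + parisiLevel X.K X.q X.m β X.K h) := by
  have hcouplings : ∀ ℓ ∈ couplingDirs N β, Real.sin (0 + ℓ.phase) = 0 := by
    simp only [couplingDirs, List.mem_flatMap, List.mem_map]
    rintro - ⟨i, -, j, -, rfl⟩
    simp
  rw [interpolation, Jet.averageList_val_of_sin_eq_zero _ _ hcouplings, X.levelJet_val_zero]
  simp [mul_add]

lemma levelJet_val_pi_div_two (j : ℕ) (x : (Fin N → Bool) → ℝ) :
    (X.levelJet N β j).val (Real.pi / 2, x) = (logSumExp _).val (Real.pi / 2, x) := by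
  have hfields (c : ℝ) : ∀ ℓ ∈ fieldDirs N c, Real.sin (Real.pi / 2 + ℓ.phase) = 0 := by
    simp only [fieldDirs, List.mem_map]
    rintro - ⟨i, -, rfl⟩
    simp
  induction j with
  | zero => rfl
  | succ j ih => exact (Jet.averageList_val_of_sin_eq_zero _ _ (hfields _) x).trans ih

lemma interpolation_val_pi_div_two (h : ℝ) :
    (X.interpolation N β).val (Real.pi / 2, siteField β fun _ => h) =
      ∫ Jc, Real.log (ZSK N β h Jc) ∂gaussC N := by
  obtain ⟨C, hC⟩ := (isRegular_logSumExp (ι := Fin N → Bool)).exists_lipschitzWith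
  have hLip := hC.comp (LipschitzWith.prodMk_left (Real.pi / 2))
  have hfold := Jet.averageList_val (X.levelJet N β X.K) 0 (Real.pi / 2) (couplingDirs N β)
  simp only [couplingDirs, List.foldl_flatMap, List.foldl_map, add_zero, Real.sin_pi_div_two,
    one_smul, gaussLogMean, if_true, X.levelJet_val_pi_div_two] at hfold
  have := foldl_foldl_eq_integral_gaussC (couplingVec (N := N) β) hLip
  simp only [log_ZSK β h _ (Real.pi / 2)]
  exact congrFun (hfold.trans this) _

end OrderParam

/-! ### The trial function and the lower bound -/

namespace OrderParam

variable (X : OrderParam)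

lemma monotoneOn_q : MonotoneOn X.q (Set.Iic X.K) := by
  refine monotoneOn_of_le_succ Set.ordConnected_Iic fun a _ _ ha => ?_
  exact X.hq_mono a ha

lemma xFun_of_mem_Ioo {a : ℕ} (ha : a < X.K) {r : ℝ} (hr : r ∈ Set.Ioo (X.q a) (X.q (a + 1))) :
    xFun X.K X.q X.m r = X.m (a + 1) := by
  have hr1 : ¬ 1 ≤ r := by
    have := X.monotoneOn_q (Set.mem_Iic.2 ha) Set.self_mem_Iic ha
    rw [X.hqK] at this
    exact not_le.2 (hr.2.trans_le this)
  have hleast : IsLeast {b | r < X.q b} (a + 1) := by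
    refine ⟨hr.2, fun b hb => Nat.succ_le_of_lt (not_le.1 fun hba => ?_)⟩
    have := X.monotoneOn_q (Set.mem_Iic.2 (hba.trans ha.le)) (Set.mem_Iic.2 ha.le) hba
    exact (hb.trans_le this).not_gt hr.1
  rw [xFun, if_neg hr1, hleast.csInf_eq]

lemma integral_id_mul_xFun :
    ∫ r in (0 : ℝ)..1, r * xFun X.K X.q X.m r = X.sqIncrements 0 / 2 := by
  have hstep (a : ℕ) (ha : a < X.K) : Set.EqOn (fun r => r * X.m (a + 1))
      (fun r => r * xFun X.K X.q X.m r) (Set.uIoo (X.q a) (X.q (a + 1))) := fun r hr => by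
    rw [Set.uIoo_of_le (X.hq_mono a ha)] at hr
    simp only [X.xFun_of_mem_Ioo ha hr]
  have hsum := intervalIntegral.sum_integral_adjacent_intervals (μ := volume) (a := X.q)
    (n := X.K) fun a ha => IntervalIntegrable.congr_uIoo
      ((continuous_id.mul continuous_const).intervalIntegrable _ _) (hstep a ha)
  rw [← X.hq0, ← X.hqK, ← hsum, sqIncrements, ← Finset.range_eq_Ico, Finset.sum_div]
  refine Finset.sum_congr rfl fun a ha => ?_
  rw [← intervalIntegral.integral_congr_uIoo (hstep a (Finset.mem_range.1 ha)),
    intervalIntegral.integral_mul_const, integral_id]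
  ring

end OrderParam

lemma quenchedFE_le_trialAlpha {N : ℕ} (hN : 0 < N) (β h : ℝ) (X : OrderParam) :
    quenchedFE N β h ≤ trialAlpha X.K X.q X.m β h := by
  have hbound := X.interpolation_pi_div_two_le hN β (siteField β fun _ => h)
  rw [X.interpolation_val_pi_div_two, X.interpolation_val_zero] at hbound
  rw [quenchedFE, trialAlpha, X.integral_id_mul_xFun,
    inv_mul_le_iff₀ (Nat.cast_pos.2 hN : (0 : ℝ) < N)]
  linarith

lemma sum_spin_mul_eq_zero {N : ℕ} (i : Fin N) {g : (Fin N → Bool) → ℝ}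
    (hg : ∀ σ, g (Function.update σ i (!σ i)) = g σ) : ∑ σ, spin (σ i) * g σ = 0 := by
  have hflip : Function.Involutive fun σ : Fin N → Bool => Function.update σ i (!σ i) :=
    fun σ => by simp
  have hspin (b : Bool) : spin (!b) = -spin b := by cases b <;> simp [spin]
  have := Equiv.sum_comp hflip.toPerm fun σ => spin (σ i) * g σ
  simp only [Function.Involutive.coe_toPerm, Function.update_self, hspin, hg, neg_mul,
    Finset.sum_neg_distrib] at this
  linarith

lemma sum_hamSK (N : ℕ) (h : ℝ) (Jc : Fin N → Fin N → ℝ) : ∑ σ, hamSK N h Jc σ = 0 := by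
  have hfield (i : Fin N) : ∑ σ : Fin N → Bool, spin (σ i) = 0 := by
    simpa using sum_spin_mul_eq_zero i (g := fun _ => 1) fun _ => rfl
  have hpair (i j : Fin N) :
      ∑ σ : Fin N → Bool, (if i < j then Jc i j * spin (σ i) * spin (σ j) else 0) = 0 := by
    split_ifs with hij
    · simp only [mul_assoc, ← Finset.mul_sum]
      rw [sum_spin_mul_eq_zero i (g := fun σ => spin (σ j))
        fun σ => by rw [Function.update_of_ne hij.ne'], mul_zero]
    · exact Finset.sum_const_zero
  simp only [hamSK, Finset.sum_sub_distrib, ← Finset.mul_sum]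
  rw [Finset.sum_comm (γ := Fin N → Bool)]
  simp_rw [Finset.sum_comm (γ := Fin N → Bool)]
  simp [hfield, hpair]

lemma one_le_ZSK (N : ℕ) (β h : ℝ) (Jc : Fin N → Fin N → ℝ) : 1 ≤ ZSK N β h Jc :=
  calc (1 : ℝ) ≤ 2 ^ N := one_le_pow₀ one_le_two
    _ = ∑ σ : Fin N → Bool, (-(β * hamSK N h Jc σ) + 1) := by
        simp [Finset.sum_add_distrib, ← Finset.mul_sum, sum_hamSK]
    _ ≤ ZSK N β h Jc := Finset.sum_le_sum fun σ _ => Real.add_one_le_exp _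

lemma quenchedFE_nonneg (N : ℕ) (β h : ℝ) : 0 ≤ quenchedFE N β h :=
  mul_nonneg (by positivity) (integral_nonneg fun Jc => Real.log_nonneg (one_le_ZSK N β h Jc))

instance : Nonempty OrderParam :=
  ⟨{ K := 1
     hK := le_rfl
     q := fun a => a
     m := fun a => if a = 0 then 0 else 1
     hq0 := Nat.cast_zero
     hqK := Nat.cast_one
     hq_mono := fun a _ => Nat.cast_le.2 a.le_succ
     hm0 := by simp
     hmtop := by simp
     hm1 := by simp
     hm_mono := fun a h0 h1 => by omega
     hmK := by simp }⟩

theorem guerra_bound_limsup_general (β h : ℝ) :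
    limsup (fun N : ℕ => quenchedFE N β h) atTop
      ≤ ⨅ X : OrderParam, trialAlpha X.K X.q X.m β h := by
  refine le_ciInf fun X => limsup_le_of_le ?_ ?_
  · exact IsCoboundedUnder.of_frequently_ge (a := 0)
      (Frequently.of_forall fun N => quenchedFE_nonneg N β h)
  · filter_upwards [eventually_gt_atTop 0] with N hN
    exact quenchedFE_le_trialAlpha hN β h X

/-- for every `β ≥ 0` and `h ∈ ℝ`,
`limsup_{N→∞} N⁻¹ E log Z_N(β, h, J) ≤ ᾱ(β, h) = inf_x ᾱ(β, h; x)`,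
the infimum running over all piecewise constant functional order parameters. -/
theorem guerra_bound_limsup (β h : ℝ) (hβ : 0 ≤ β) :
    Filter.limsup (fun N : ℕ => quenchedFE N β h) Filter.atTop
      ≤ ⨅ X : OrderParam, trialAlpha X.K X.q X.m β h :=
  guerra_bound_limsup_general β h

end
end

section
/- Let x̄ be a piecewise constant order parameter with levels 0 = q_0 ≤ q_1 ≤ … ≤ q_K = 1 and values 0 ≤ m̄_1 ≤ … ≤ m̄_K (not required to be ≤ 1). For β ≥ m̄_K, let x = x̄/β (so 0 ≤ x(q) ≤ 1). Then lim_{β→∞} β⁻¹ ᾱ(β,h; x̄/β) = f̄(0,h;x̄) − (1/2) ∫₀¹ q x̄(q) dq, where f̄ is defined by the same backward Gaussian recursion as the Parisi function but with final condition f̄(1,y) = |y|. -/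
open MeasureTheory ProbabilityTheory Filter

noncomputable section

/-!
The exponential mean `m⁻¹ log E exp (m X)` is monotone in `X`, commutes with the addition of
constants, and scales as `β⁻¹ M_{m/β}(X) = M_m(β⁻¹ X)`. By scaling, `β⁻¹ f(·; x̄/β, β)` satisfies
the recursion of `f̄(·; x̄)`, with final condition `β⁻¹ log cosh (β y)` in place of `|y|`. The two
final conditions differ by at most `β⁻¹ log 2`, and by the first two properties a backward step does
not increase this distance, so `f̄` and `β⁻¹ f` differ by at most `β⁻¹ log 2` at every level.
-/

section ExpMean

variable {Ω : Type*} [MeasurableSpace Ω] {μ : Measure Ω} {X Y : Ω → ℝ} {m : ℝ}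

/-- The exponential mean `m⁻¹ log E exp (m X)` of a random variable `X`, extended to `m = 0` by its
limit `E X`. A step of the Parisi recursion is an exponential mean over a Gaussian increment. -/
def expMean (X : Ω → ℝ) (μ : Measure Ω) (m : ℝ) : ℝ :=
  if m = 0 then ∫ ω, X ω ∂μ else m⁻¹ * cgf X μ m

lemma expMean_mono [NeZero μ] (hX : Integrable X μ) (hY : Integrable Y μ)
    (hXm : m ∈ integrableExpSet X μ) (hYm : m ∈ integrableExpSet Y μ) (hXY : X ≤ᵐ[μ] Y) :
    expMean X μ m ≤ expMean Y μ m := by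
  unfold expMean
  split_ifs with hm
  · exact integral_mono_ae hX hY hXY
  rcases lt_or_gt_of_ne hm with hneg | hpos
  · have hcgf : cgf Y μ m ≤ cgf X μ m :=
      Real.log_le_log (mgf_pos_iff.mpr hYm) (mgf_anti_of_nonpos hXY hneg.le hXm)
    exact mul_le_mul_of_nonpos_left hcgf (inv_nonpos.mpr hneg.le)
  · have hcgf : cgf X μ m ≤ cgf Y μ m :=
      Real.log_le_log (mgf_pos_iff.mpr hXm) (mgf_mono_of_nonneg hXY hpos.le hYm)
    exact mul_le_mul_of_nonneg_left hcgf (inv_nonneg.mpr hpos.le)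

lemma expMean_add_const [IsProbabilityMeasure μ] (hX : Integrable X μ)
    (hXm : m ∈ integrableExpSet X μ) (c : ℝ) :
    expMean (fun ω => X ω + c) μ m = expMean X μ m + c := by
  unfold expMean
  split_ifs with hm
  · simp [integral_add hX (integrable_const c)]
  · rw [cgf, mgf_add_const, Real.log_mul (mgf_pos hXm).ne' (Real.exp_pos _).ne', Real.log_exp,
      mul_add, inv_mul_cancel_left₀ hm, cgf]

lemma expMean_le_expMean_add [IsProbabilityMeasure μ] (hX : Integrable X μ) (hY : Integrable Y μ)
    (hXm : m ∈ integrableExpSet X μ) (hYm : m ∈ integrableExpSet Y μ) {c : ℝ}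
    (hXY : ∀ᵐ ω ∂μ, X ω ≤ Y ω + c) :
    expMean X μ m ≤ expMean Y μ m + c := by
  have hYcm : m ∈ integrableExpSet (fun ω => Y ω + c) μ := by
    simpa only [integrableExpSet, Set.mem_ofPred_eq, mul_add, Real.exp_add]
      using hYm.mul_const (Real.exp (m * c))
  rw [← expMean_add_const hY hYm]
  exact expMean_mono hX (hY.add (integrable_const c)) hXm hYcm hXY

lemma expMean_const_mul {b : ℝ} (hb : b ≠ 0) (X : Ω → ℝ) (μ : Measure Ω) (m : ℝ) :
    expMean (fun ω => b * X ω) μ m = b * expMean X μ (b * m) := by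
  by_cases hm : m = 0
  · simp [expMean, hm, integral_const_mul]
  · rw [expMean, expMean, if_neg hm, if_neg (mul_ne_zero hb hm), cgf, cgf, mgf_const_mul,
      mul_inv, mul_assoc, mul_inv_cancel_left₀ hb]

end ExpMean

lemma integrableExpSet_comp_eq_univ {Ω : Type*} [MeasurableSpace Ω] {μ : Measure Ω}
    {X : Ω → ℝ} (hX : integrableExpSet X μ = Set.univ) {f : ℝ → ℝ} {L : NNReal}
    (hf : LipschitzWith L f) : integrableExpSet (fun ω => f (X ω)) μ = Set.univ := by
  refine Set.eq_univ_of_forall fun t => ?_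
  have hX_exp (u : ℝ) : Integrable (fun ω => Real.exp (u * X ω)) μ :=
    hX.ge (Set.mem_univ u)
  have hX_meas : AEMeasurable X μ :=
    aemeasurable_of_mem_interior_integrableExpSet (v := 0) (by simp [hX])
  have hf_growth (x : ℝ) : |f x| ≤ |f 0| + L * |x| := by
    have hdist : |f x - f 0| ≤ L * |x| := by simpa [Real.dist_eq] using hf.dist_le_mul x 0
    linarith [abs_sub_abs_le_abs_sub (f x) (f 0)]
  have hdom : Integrable (fun ω => Real.exp (|t| * |f 0|) * Real.exp (|t| * L * |X ω|)) μ :=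
    (integrable_exp_mul_abs (hX_exp _) (hX_exp _)).const_mul _
  refine hdom.mono' ?_ (ae_of_all _ fun ω => ?_)
  · exact (Real.measurable_exp.comp_aemeasurable
      ((hf.continuous.measurable.comp_aemeasurable hX_meas).const_mul t)).aestronglyMeasurable
  · rw [Real.norm_eq_abs, Real.abs_exp, ← Real.exp_add, Real.exp_le_exp]
    calc t * f (X ω) ≤ |t| * |f (X ω)| := (le_abs_self _).trans (abs_mul _ _).le
      _ ≤ |t| * (|f 0| + L * |X ω|) := by gcongr; exact hf_growth _
      _ = |t| * |f 0| + |t| * L * |X ω| := by ring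

section BackwardStep

variable {g g' : ℝ → ℝ} {L L' : NNReal}

lemma pStep_eq_expMean (m s : ℝ) (g : ℝ → ℝ) (y : ℝ) :
    pStep m s g y = expMean (fun z => g (y + z * Real.sqrt s)) stdGauss m :=
  rfl

lemma integrableExpSet_comp_add_mul_sqrt (hg : LipschitzWith L g) (s y : ℝ) :
    integrableExpSet (fun z => g (y + z * Real.sqrt s)) stdGauss = Set.univ := by
  have haffine : LipschitzWith (Real.nnabs (Real.sqrt s)) fun z => y + z * Real.sqrt s :=
    LipschitzWith.of_dist_le_mul fun z z' => by
      rw [dist_add_left, Real.dist_eq, Real.dist_eq, ← sub_mul, abs_mul, mul_comm, Real.coe_nnabs]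
  exact integrableExpSet_comp_eq_univ integrableExpSet_id_gaussianReal (hg.comp haffine)

lemma pStep_le_pStep_add (hg : LipschitzWith L g) (hg' : LipschitzWith L' g') (m s : ℝ)
    {y y' c : ℝ} (h : ∀ w, g (y + w) ≤ g' (y' + w) + c) :
    pStep m s g y ≤ pStep m s g' y' + c := by
  have hexp := integrableExpSet_comp_add_mul_sqrt hg s y
  have hexp' := integrableExpSet_comp_add_mul_sqrt hg' s y'
  rw [pStep_eq_expMean, pStep_eq_expMean]
  exact expMean_le_expMean_add
    (integrable_of_mem_interior_integrableExpSet (by simp [hexp]))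
    (integrable_of_mem_interior_integrableExpSet (by simp [hexp']))
    (by simp [hexp]) (by simp [hexp']) (ae_of_all _ fun z => h _)

lemma lipschitzWith_pStep (hg : LipschitzWith L g) (m s : ℝ) : LipschitzWith L (pStep m s g) := by
  refine LipschitzWith.of_le_add_mul L fun y y' => pStep_le_pStep_add hg hg m s fun w => ?_
  have hdist := hg.dist_le_mul (y + w) (y' + w)
  rw [dist_add_right, Real.dist_eq] at hdist
  linarith [le_abs_self (g (y + w) - g (y' + w))]

lemma pStep_const_mul {b : ℝ} (hb : b ≠ 0) (m s : ℝ) (g : ℝ → ℝ) (y : ℝ) :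
    pStep m s (fun w => b * g w) y = b * pStep (b * m) s g y :=
  expMean_const_mul hb _ _ _

end BackwardStep

section Recursion

variable (K : ℕ) (q m : ℕ → ℝ) {g g' : ℝ → ℝ} {L L' : NNReal}

/-- The backward Gaussian recursion with an arbitrary final condition `g` at `q_K`, of which
`parisiLevel` and `parisiLevelBar` are instances: `parisiRec K q m g j` is its value at the node
`q_{K-j}`. -/
def parisiRec (g : ℝ → ℝ) : ℕ → ℝ → ℝ
  | 0 => g
  | j + 1 => pStep (m (K - j)) (q (K - j) - q (K - j - 1)) (parisiRec g j)

lemma parisiLevel_eq_parisiRec (β : ℝ) (j : ℕ) :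
    parisiLevel K q m β j = parisiRec K q m (fun y => Real.log (Real.cosh (β * y))) j := by
  induction j with
  | zero => rfl
  | succ j ih => rw [parisiLevel, parisiRec, ih]

lemma parisiLevelBar_eq_parisiRec (j : ℕ) :
    parisiLevelBar K q m j = parisiRec K q m (fun y => |y|) j := by
  induction j with
  | zero => rfl
  | succ j ih => rw [parisiLevelBar, parisiRec, ih]

lemma lipschitzWith_parisiRec (hg : LipschitzWith L g) (j : ℕ) :
    LipschitzWith L (parisiRec K q m g j) := by
  induction j with
  | zero => exact hg
  | succ j ih => exact lipschitzWith_pStep ih _ _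

lemma parisiRec_le_parisiRec_add (hg : LipschitzWith L g) (hg' : LipschitzWith L' g') {c : ℝ}
    (h : ∀ y, g y ≤ g' y + c) (j : ℕ) (y : ℝ) :
    parisiRec K q m g j y ≤ parisiRec K q m g' j y + c := by
  induction j generalizing y with
  | zero => exact h y
  | succ j ih =>
    exact pStep_le_pStep_add (lipschitzWith_parisiRec K q m hg j)
      (lipschitzWith_parisiRec K q m hg' j) _ _ fun w => ih (y + w)

lemma parisiRec_const_mul {b : ℝ} (hb : b ≠ 0) (g : ℝ → ℝ) (j : ℕ) (y : ℝ) :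
    parisiRec K q m (fun w => b * g w) j y = b * parisiRec K q (fun a => b * m a) g j y := by
  induction j generalizing y with
  | zero => rfl
  | succ j ih =>
    rw [parisiRec, funext ih]
    exact pStep_const_mul hb _ _ _ _

end Recursion

section LogCosh

lemma lipschitzWith_log_cosh : LipschitzWith 1 fun x => Real.log (Real.cosh x) := by
  have hderiv (x : ℝ) : HasDerivAt (fun x => Real.log (Real.cosh x)) (Real.tanh x) x := by
    rw [Real.tanh_eq_sinh_div_cosh]
    exact (Real.hasDerivAt_cosh x).log (Real.cosh_pos x).ne'
  refine lipschitzWith_of_nnnorm_deriv_le (fun x => (hderiv x).differentiableAt) fun x => ?_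
  rw [(hderiv x).deriv, ← NNReal.coe_le_coe, coe_nnnorm]
  exact (Real.abs_tanh_lt_one x).le

lemma log_cosh_le_abs (x : ℝ) : Real.log (Real.cosh x) ≤ |x| := by
  have h := lipschitzWith_log_cosh.dist_le_mul x 0
  simp only [Real.dist_eq, Real.cosh_zero, Real.log_one, sub_zero, NNReal.coe_one, one_mul] at h
  exact (le_abs_self _).trans h

lemma abs_le_log_cosh_add_log_two (x : ℝ) : |x| ≤ Real.log (Real.cosh x) + Real.log 2 := by
  rw [← Real.log_mul (Real.cosh_pos x).ne' two_ne_zero, Real.le_log_iff_exp_le (by positivity),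
    Real.cosh_eq, div_mul_cancel₀ _ two_ne_zero]
  exact Real.exp_abs_le x

variable {β : ℝ}

lemma lipschitzWith_inv_mul_log_cosh (hβ : β ≠ 0) :
    LipschitzWith 1 fun y => β⁻¹ * Real.log (Real.cosh (β * y)) := by
  refine LipschitzWith.of_dist_le_mul fun y y' => ?_
  have h := lipschitzWith_log_cosh.dist_le_mul (β * y) (β * y')
  simp only [Real.dist_eq, NNReal.coe_one, one_mul, ← mul_sub, abs_mul, abs_inv] at h ⊢
  exact (inv_mul_le_iff₀ (abs_pos.mpr hβ)).mpr h

lemma inv_mul_log_cosh_le_abs (hβ : 0 < β) (y : ℝ) :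
    β⁻¹ * Real.log (Real.cosh (β * y)) ≤ |y| := by
  rw [inv_mul_le_iff₀ hβ]
  simpa only [abs_mul, abs_of_pos hβ] using log_cosh_le_abs (β * y)

lemma abs_le_inv_mul_log_cosh_add (hβ : 0 < β) (y : ℝ) :
    |y| ≤ β⁻¹ * Real.log (Real.cosh (β * y)) + β⁻¹ * Real.log 2 := by
  rw [← mul_add, le_inv_mul_iff₀ hβ]
  simpa only [abs_mul, abs_of_pos hβ] using abs_le_log_cosh_add_log_two (β * y)

end LogCosh

section ZeroTemperature

variable (K : ℕ) (q m : ℕ → ℝ) {β : ℝ}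

lemma inv_mul_parisiLevel_div (hβ : β ≠ 0) (j : ℕ) (y : ℝ) :
    β⁻¹ * parisiLevel K q (fun a => m a / β) β j y =
      parisiRec K q m (fun w => β⁻¹ * Real.log (Real.cosh (β * w))) j y := by
  rw [parisiLevel_eq_parisiRec, parisiRec_const_mul K q m (inv_ne_zero hβ)]
  simp only [div_eq_inv_mul]

lemma inv_mul_parisiLevel_div_le (hβ : 0 < β) (j : ℕ) (y : ℝ) :
    β⁻¹ * parisiLevel K q (fun a => m a / β) β j y ≤ parisiLevelBar K q m j y := by
  rw [inv_mul_parisiLevel_div K q m hβ.ne', parisiLevelBar_eq_parisiRec]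
  have hfinal (y : ℝ) : β⁻¹ * Real.log (Real.cosh (β * y)) ≤ |y| + 0 :=
    (inv_mul_log_cosh_le_abs hβ y).trans_eq (add_zero _).symm
  exact (parisiRec_le_parisiRec_add K q m (lipschitzWith_inv_mul_log_cosh hβ.ne')
    lipschitzWith_one_norm hfinal j y).trans_eq (add_zero _)

lemma parisiLevelBar_le_inv_mul_parisiLevel_div_add (hβ : 0 < β) (j : ℕ) (y : ℝ) :
    parisiLevelBar K q m j y ≤
      β⁻¹ * parisiLevel K q (fun a => m a / β) β j y + β⁻¹ * Real.log 2 := by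
  rw [inv_mul_parisiLevel_div K q m hβ.ne', parisiLevelBar_eq_parisiRec]
  exact parisiRec_le_parisiRec_add K q m lipschitzWith_one_norm
    (lipschitzWith_inv_mul_log_cosh hβ.ne') (abs_le_inv_mul_log_cosh_add hβ) j y

lemma xFun_div (β r : ℝ) : xFun K q (fun a => m a / β) r = xFun K q m r / β := by
  unfold xFun
  split_ifs <;> rfl

lemma inv_mul_trialAlpha_div (hβ : β ≠ 0) (h : ℝ) :
    β⁻¹ * trialAlpha K q (fun a => m a / β) β h =
      β⁻¹ * Real.log 2 + β⁻¹ * parisiLevel K q (fun a => m a / β) β K h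
        - 1 / 2 * ∫ r in (0 : ℝ)..1, r * xFun K q m r := by
  simp only [trialAlpha, xFun_div, ← mul_div_assoc, intervalIntegral.integral_div]
  field_simp

lemma inv_mul_trialAlpha_div_mem_Icc (hβ : 0 < β) (h : ℝ) :
    β⁻¹ * trialAlpha K q (fun a => m a / β) β h ∈
      Set.Icc (gsTrial K q m h) (gsTrial K q m h + β⁻¹ * Real.log 2) := by
  have hle := inv_mul_parisiLevel_div_le K q m hβ K h
  have hge := parisiLevelBar_le_inv_mul_parisiLevel_div_add K q m hβ K h
  rw [inv_mul_trialAlpha_div K q m hβ.ne', gsTrial]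
  constructor <;> linarith

end ZeroTemperature

theorem zeroT_limit_of_trial_general {K : ℕ} {q : ℕ → ℝ} (_hq0 : q 0 = 0) (_hqK : q K = 1)
    (_hq_mono : ∀ a, a < K → q a ≤ q (a + 1)) (m : ℕ → ℝ) (h : ℝ) :
    Tendsto (fun β : ℝ => β⁻¹ * trialAlpha K q (fun a => m a / β) β h) atTop
      (nhds (gsTrial K q m h)) := by
  have herror : Tendsto (fun β : ℝ => gsTrial K q m h + β⁻¹ * Real.log 2) atTop
      (nhds (gsTrial K q m h)) := by
    simpa only [zero_mul, add_zero] using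
      (tendsto_inv_atTop_zero.mul_const (Real.log 2)).const_add (gsTrial K q m h)
  have hbounds := (eventually_gt_atTop (0 : ℝ)).mono fun β hβ =>
    inv_mul_trialAlpha_div_mem_Icc K q m hβ h
  exact tendsto_of_tendsto_of_tendsto_of_le_of_le' tendsto_const_nhds herror
    (hbounds.mono fun _ => And.left) (hbounds.mono fun _ => And.right)

/-- Lemma `llim` of the paper: for a zero-temperature order
parameter `x̄` (values `0 ≤ m̄_1 ≤ … ≤ m̄_K`, not required to be `≤ 1`), taking
`x = x̄/β` one has
`lim_{β→∞} β⁻¹ ᾱ(β, h; x̄/β) = f̄(0, h; x̄) − (1/2) ∫₀¹ r x̄(r) dr`,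
where `f̄` is given by the same backward Gaussian recursion as the Parisi function but
with final condition `f̄(1, y) = |y|`. -/
theorem zeroT_limit_of_trial (X : ZeroTParam) (h : ℝ) :
    Tendsto (fun β : ℝ => β⁻¹ * trialAlpha X.K X.q (fun a => X.m a / β) β h) atTop
      (nhds (gsTrial X.K X.q X.m h)) := by
  exact zeroT_limit_of_trial_general X.hq0 X.hqK X.hq_mono X.m h

end
end
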